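/- arXiv:2306.03720 — 2 statements merged into one kernel-verified Lean document; each statement's English description precedes it below -/
import Mathlib

section
/- Assume d ≥ 2 and 2 < p < 2_s^⋆. For a fixed ε ∈ (0,1), let g_ε be (s,γ)-admissible for some s > d/(d+1) and γ > 1. Then: (i) for every k ∈ {2,…,d−2}, there exists a nonzero u ∈ H^s_k with q_ε(u)/‖u‖_{L^p}² = R^k_ε(p); and (ii) there exists a nonzero radial u ∈ H^s_rad with q_ε(u)/‖u‖_{L^p}² = R^rad_ε(p). -/
open MeasureTheory Real Filter
open scoped ENNReal FourierTransform RealInnerProductSpace Topology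

noncomputable section

/-- Euclidean space `ℝ^d`. -/
abbrev Rd (d : ℕ) : Type := EuclideanSpace ℝ (Fin d)

/-- `U` is the (distributional, hence `L²`-) Fourier transform of `u`:
it pairs against Schwartz functions the way the Fourier transform of `u` must. -/
def IsFT {d : ℕ} (U u : Rd d → ℂ) : Prop :=
  ∀ φ : SchwartzMap (Rd d) ℂ, ∫ ξ, U ξ * φ ξ = ∫ x, u x * 𝓕 (⇑φ) x

/-- An element of `H^s(ℝ^d)`: an `L²` function `toFun` together with its Fourier
transform `ft`, satisfying the `H^s` integrability condition. -/
structure HsFn (d : ℕ) (s : ℝ) where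
  toFun : Rd d → ℂ
  ft : Rd d → ℂ
  memL2 : MemLp toFun 2 volume
  ft_memL2 : MemLp ft 2 volume
  isFT : IsFT ft toFun
  memHs : Integrable (fun ξ : Rd d => ‖ft ξ‖ ^ 2 * (1 + ‖ξ‖ ^ 2) ^ s) volume

/-- The quadratic form `q_ε(u) = ∫ |û(ξ)|² g(|ξ|) dξ` (for a fixed symbol `g`). -/
def qeps {d : ℕ} {s : ℝ} (g : ℝ → ℝ) (u : HsFn d s) : ℝ :=
  ∫ ξ : Rd d, ‖u.ft ξ‖ ^ 2 * g ‖ξ‖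

/-- The `L^p` norm (as a real number). -/
def LpN {d : ℕ} (p : ℝ) (f : Rd d → ℂ) : ℝ :=
  (eLpNorm f (ENNReal.ofReal p) volume).toReal

/-- The set of values of the Rayleigh quotient `q_ε(u)/‖u‖_p²` over nonzero
`u ∈ H^s` satisfying the symmetry constraint `P`. -/
def RayleighSet (d : ℕ) (s p : ℝ) (g : ℝ → ℝ) (P : (Rd d → ℂ) → Prop) : Set ℝ :=
  {t | ∃ u : HsFn d s, P u.toFun ∧ ¬ u.toFun =ᵐ[volume] (fun _ => (0 : ℂ)) ∧
      MemLp u.toFun (ENNReal.ofReal p) volume ∧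
      t = qeps g u / LpN p u.toFun ^ 2}

/-- The Rayleigh quotient infimum. -/
def Rayleigh (d : ℕ) (s p : ℝ) (g : ℝ → ℝ) (P : (Rd d → ℂ) → Prop) : ℝ :=
  sInf (RayleighSet d s p g P)

/-- The Rayleigh quotient infimum is attained. -/
def Attained (d : ℕ) (s p : ℝ) (g : ℝ → ℝ) (P : (Rd d → ℂ) → Prop) : Prop :=
  ∃ u : HsFn d s, P u.toFun ∧ ¬ u.toFun =ᵐ[volume] (fun _ => (0 : ℂ)) ∧
      MemLp u.toFun (ENNReal.ofReal p) volume ∧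
      qeps g u / LpN p u.toFun ^ 2 = Rayleigh d s p g P

/-- A radial function. -/
def Radial {d : ℕ} (f : Rd d → ℂ) : Prop := ∀ x y : Rd d, ‖x‖ = ‖y‖ → f x = f y

/-- The squared norm of the first block of coordinates (the first `d - k` ones),
under the identification `ℝ^d = ℝ^{d-k} × ℝ^k`. -/
def blockSq (d k : ℕ) (x : Rd d) : ℝ := ∑ i : Fin d, if (i : ℕ) < d - k then x i ^ 2 else 0

/-- A `G_k = O(d-k) × O(k)`-symmetric function: it depends only on the norms of the
two blocks of coordinates. -/
def GkSymmetric (d k : ℕ) (f : Rd d → ℂ) : Prop :=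
  ∀ x y : Rd d, blockSq d k x = blockSq d k y → ‖x‖ = ‖y‖ → f x = f y

/-- An `(s,γ)`-admissible family of symbols, with admissibility constants `c, C`. -/
def IsAdmissible (s γ c C : ℝ) (g : ℝ → ℝ → ℝ) : Prop :=
  (∀ ε ∈ Set.Ioo (0:ℝ) 1, Measurable (g ε)) ∧
  (∀ ε ∈ Set.Ioo (0:ℝ) 1, ∀ r : ℝ, 0 < g ε r) ∧
  (∀ ε ∈ Set.Ioo (0:ℝ) 1, ∀ r : ℝ, 1/2 ≤ |r - 1| →
      c * (1 + |r| ^ (2*s)) ≤ g ε r ∧ g ε r ≤ C * (1 + |r| ^ (2*s))) ∧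
  (∀ ε ∈ Set.Ioo (0:ℝ) 1, ∀ r : ℝ, |r - 1| ≤ 1/2 →
      c * (ε + |r - 1| ^ γ) ≤ g ε r ∧ g ε r ≤ C * (ε + |r - 1| ^ γ))

/-- The `G_k`-symmetric Stein–Tomas exponent `2_⋆^k`. -/
def twoStarK (d k : ℕ) : ℝ :=
  2 * ((d : ℝ) + (min k (d - k) : ℕ)) / ((d : ℝ) - 2 + (min k (d - k) : ℕ))

/-- The interpolation parameter `α_k`. -/
def alphaK (d k : ℕ) (p : ℝ) : ℝ := (1/2 - 1/p) / (1/2 - 1/twoStarK d k)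

/-- The spherical shell `A_{ε,δ}` around the unit sphere (with `I_{ε,δ}` scale `ε^{1/γ}`). -/
def Aset (d : ℕ) (γ ε δ : ℝ) : Set (Rd d) :=
  {ξ | δ * ε ^ (1/γ) ≤ |‖ξ‖ - 1| ∧ |‖ξ‖ - 1| ≤ δ⁻¹ * ε ^ (1/γ)}

abbrev HH (d : ℕ) := Lp ℂ 2 (volume : Measure (Rd d))

lemma L2_isFT {d : ℕ} (h : HH d) : IsFT (⇑(𝓕 h : HH d)) (⇑h) := by
  intro φ
  have h1 := congrArg (fun T => T φ) (Lp.fourier_toTemperedDistribution_eq h)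
  simp only [TemperedDistribution.fourier_apply, Lp.toTemperedDistribution_apply] at h1
  simp only [smul_eq_mul] at h1
  simp only [mul_comm _ (φ _), ← h1]
  congr 1
  ext x
  rw [mul_comm]
  rfl

lemma ae_eq_of_schwartz {d : ℕ} {f g : Rd d → ℂ} (hf : LocallyIntegrable f)
    (hg : LocallyIntegrable g)
    (h : ∀ φ : SchwartzMap (Rd d) ℂ, ∫ ξ, f ξ * φ ξ = ∫ ξ, g ξ * φ ξ) : f =ᵐ[volume] g := by
  apply ae_eq_of_integral_contDiff_smul_eq hf hg
  intro g g_smooth g_cpt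
  have hg₁ : HasCompactSupport (Complex.ofRealCLM ∘ g) := g_cpt.comp_left rfl
  have hg₂ : ContDiff ℝ ((⊤ : ℕ∞) : WithTop ℕ∞) (Complex.ofRealCLM ∘ g) := Complex.ofRealCLM.contDiff.comp g_smooth
  have := h (hg₁.toSchwartzMap hg₂)
  simpa [mul_comm] using this

lemma isFT_toLp {d : ℕ} {U u : Rd d → ℂ} (hU : MemLp U 2) (hu : MemLp u 2) (h : IsFT U u) :
    𝓕 (hu.toLp u) = hU.toLp U := by
  apply Lp.ext
  refine EventuallyEq.trans ?_ hU.coeFn_toLp.symm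
  apply ae_eq_of_schwartz
  · exact (Lp.memLp _).locallyIntegrable (by norm_num)
  · exact hU.locallyIntegrable (by norm_num)
  intro φ
  rw [L2_isFT (hu.toLp u) φ, h φ]
  apply integral_congr_ae
  filter_upwards [hu.coeFn_toLp] with x hx
  rw [hx]

lemma isFT_of_toLp {d : ℕ} {U u : Rd d → ℂ} (hU : MemLp U 2) 
    (h : u =ᵐ[volume] ⇑(𝓕⁻ (hU.toLp U) : HH d)) : IsFT U u := by
  intro φ
  have := L2_isFT (𝓕⁻ (hU.toLp U) : HH d) φ
  rw [FourierTransform.fourier_fourierInv_eq] at this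
  calc _ = _ := integral_congr_ae (by filter_upwards [hU.coeFn_toLp] with x hx; rw [hx])
    _ = _ := this
    _ = _ := integral_congr_ae (by filter_upwards [h] with x hx; rw [hx])

lemma integral_fourierInv_L1 {d : ℕ} {h : Rd d → ℂ} (h1 : Integrable h)
    (φ : SchwartzMap (Rd d) ℂ) : ∫ x, 𝓕⁻ h x * 𝓕 (⇑φ) x = ∫ x, h x * φ x := by
  have key : ∫ x, 𝓕⁻ h x * 𝓕 (⇑φ) x = ∫ x, 𝓕 h x * 𝓕⁻ (⇑φ) x := by
    rw [← integral_neg_eq_self]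
    congr 1; ext x
    rw [fourierInv_eq_fourier_neg, neg_neg, fourierInv_eq_fourier_neg]
  rw [key]
  have := VectorFourier.integral_fourierIntegral_smul_eq_flip (L := innerₗ (Rd d)) 
    (μ := volume) (ν := volume) (f := h)
    (g := 𝓕⁻ (⇑φ)) continuous_fourierChar (by exact continuous_inner) h1 
      (by
        have := (𝓕⁻ φ).integrable (μ := volume)
        rwa [SchwartzMap.fourierInv_coe] at this)
  simp only [smul_eq_mul, flip_innerₗ] at this
  refine Eq.trans this ?_
  congr 1; ext x
  congr 1
  have h2 : 𝓕 (𝓕⁻ φ) = φ := FourierTransform.fourier_fourierInv_eq φ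
  have := congrArg (fun T : SchwartzMap (Rd d) ℂ => (T : Rd d → ℂ) x) h2
  simp only [SchwartzMap.fourier_coe, SchwartzMap.fourierInv_coe] at this
  exact this

lemma continuous_fourierInv_L1 {d : ℕ} {h : Rd d → ℂ} (h1 : Integrable h) :
    Continuous (𝓕⁻ h) := by
  have : Continuous (𝓕 h) := VectorFourier.fourierIntegral_continuous continuous_fourierChar
    (by exact continuous_inner) h1
  have h2 : 𝓕⁻ h = fun x => 𝓕 h (-x) := by ext x; rw [fourierInv_eq_fourier_neg]
  rw [h2]
  exact this.comp continuous_neg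

lemma fourierInv_L1L2 {d : ℕ} {h : Rd d → ℂ} (h1 : Integrable h) (h2 : MemLp h 2) :
    𝓕⁻ h =ᵐ[volume] ⇑(𝓕⁻ (h2.toLp h) : HH d) := by
  apply ae_eq_of_schwartz
  · exact (continuous_fourierInv_L1 h1).locallyIntegrable
  · exact (Lp.memLp _).locallyIntegrable (by norm_num)
  intro φ
  have hφ : ⇑φ = 𝓕 (⇑(𝓕⁻ φ : SchwartzMap (Rd d) ℂ)) := by
    rw [← SchwartzMap.fourier_coe, FourierTransform.fourier_fourierInv_eq]
  rw [hφ, integral_fourierInv_L1 h1 (𝓕⁻ φ)]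
  exact isFT_of_toLp h2 (EventuallyEq.refl _ _) (𝓕⁻ φ)

lemma IsFT.comp_isometry {d : ℕ} {U u : Rd d → ℂ} (hU : MemLp U 2) 
    (A : Rd d ≃ₗᵢ[ℝ] Rd d) (hu : ∀ x, u (A x) = u x) (h : IsFT U u) :
    (fun ξ => U (A ξ)) =ᵐ[volume] U := by
  apply ae_eq_of_schwartz
  · exact (hU.comp_measurePreserving A.measurePreserving).locallyIntegrable (by norm_num)
  · exact hU.locallyIntegrable (by norm_num)
  intro φ
  let ψ : SchwartzMap (Rd d) ℂ :=
    SchwartzMap.compCLMOfContinuousLinearEquiv ℂ A.symm.toContinuousLinearEquiv φ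
  have hψ : ⇑ψ = ⇑φ ∘ A.symm := rfl
  have e1 : ∫ ξ, U (A ξ) * φ ξ = ∫ ξ, U ξ * ψ ξ := by
    rw [← A.measurePreserving.integral_comp A.toHomeomorph.measurableEmbedding (fun ξ => U ξ * ψ ξ)]
    simp [hψ]
  have e2 : ∫ x, u x * 𝓕 (⇑ψ) x = ∫ x, u x * 𝓕 (⇑φ) x := by
    rw [← A.measurePreserving.integral_comp A.toHomeomorph.measurableEmbedding
      (fun x => u x * 𝓕 (⇑ψ) x)]
    congr 1; ext x
    rw [hψ, fourier_comp_linearIsometry, hu]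
    simp
  rw [e1, h ψ, e2, h φ]

structure Mlt (d : ℕ) where
  m : Rd d → ℝ
  K : ℝ
  q : ℝ
  meas : Measurable m
  pos : ∀ ξ, 0 < m ξ
  bound : ∀ ξ, m ξ ≤ K
  q_pos : 0 < q
  q_lt : q < 1
  dec : ∀ (j : ℕ) (ξ : Rd d), 2 ^ j ≤ ‖ξ‖ → m ξ ≤ K * q ^ j
  rad : ∀ ξ η : Rd d, ‖ξ‖ = ‖η‖ → m ξ = m η

namespace Mlt
variable {d : ℕ} (M : Mlt d)

lemma K_pos : 0 < M.K := lt_of_lt_of_le (M.pos 0) (M.bound 0)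

/-- the multiplied function, restricted to `E`. -/
def mf (E : Set (Rd d)) (f : HH d) : Rd d → ℂ := E.indicator (fun ξ => (M.m ξ : ℂ) * f ξ)

lemma mf_aesm {E : Set (Rd d)} (hE : MeasurableSet E) (f : HH d) :
    AEStronglyMeasurable (M.mf E f) volume := by
  refine AEStronglyMeasurable.indicator ?_ hE
  exact (Complex.measurable_ofReal.comp M.meas).aestronglyMeasurable.mul
    (Lp.aestronglyMeasurable f)

lemma mf_norm {E : Set (Rd d)} {a : ℝ} (ha : 0 ≤ a) (hm : ∀ ξ ∈ E, M.m ξ ≤ a)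
    (f : HH d) (ξ : Rd d) : ‖M.mf E f ξ‖ ≤ a * ‖f ξ‖ := by
  unfold mf
  by_cases h : ξ ∈ E
  · rw [Set.indicator_of_mem h, norm_mul, Complex.norm_real, Real.norm_of_nonneg (M.pos ξ).le]
    gcongr
    exact hm ξ h
  · rw [Set.indicator_of_notMem h, norm_zero]; positivity

lemma mf_eLpNorm {E : Set (Rd d)} {a : ℝ} (ha : 0 ≤ a) (hm : ∀ ξ ∈ E, M.m ξ ≤ a)
    (f : HH d) : eLpNorm (M.mf E f) 2 volume ≤ ENNReal.ofReal (a * ‖f‖) := by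
  refine (eLpNorm_le_mul_eLpNorm_of_ae_le_mul (ae_of_all _ (M.mf_norm ha hm f)) 2).trans ?_
  rw [ENNReal.ofReal_mul ha, Lp.norm_def, ENNReal.ofReal_toReal (Lp.eLpNorm_ne_top f)]

lemma mf_memLp {E : Set (Rd d)} (hE : MeasurableSet E) (f : HH d) : MemLp (M.mf E f) 2 volume :=
  ⟨M.mf_aesm hE f, (M.mf_eLpNorm M.K_pos.le (fun ξ _ => M.bound ξ) f).trans_lt
    ENNReal.ofReal_lt_top⟩

lemma mf_integrable {E : Set (Rd d)} (hE : MeasurableSet E) (hv : volume E ≠ ∞) (f : HH d) :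
    Integrable (M.mf E f) volume := by
  have h1 : MemLp (M.mf E f) 2 (volume.restrict E) := (M.mf_memLp hE f).restrict E
  have : IsFiniteMeasure (volume.restrict E) := ⟨by simpa using lt_top_iff_ne_top.2 hv⟩
  have h2 := h1.integrable (by norm_num)
  have : M.mf E f = E.indicator (M.mf E f) := by
    unfold mf; rw [Set.indicator_indicator, Set.inter_self]
  rw [this]
  exact IntegrableOn.integrable_indicator h2 hE

/-- low frequency part. -/
def low (E : Set (Rd d)) (f : HH d) (x : Rd d) : ℂ := 𝓕⁻ (M.mf E f) x

/-- the kernel. -/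
def kf (E : Set (Rd d)) (x : Rd d) : Rd d → ℂ :=
  E.indicator (fun ξ => (M.m ξ : ℂ) * (𝐞 (-⟪ξ, x⟫) : ℂ))

lemma kf_eLpNorm {E : Set (Rd d)} (hE : MeasurableSet E) {a : ℝ}
    (hm : ∀ ξ ∈ E, M.m ξ ≤ a) (x : Rd d) :
    eLpNorm (M.kf E x) 2 volume ≤ volume E ^ (2⁻¹ : ℝ) * ENNReal.ofReal a := by
  unfold kf
  rw [eLpNorm_indicator_eq_eLpNorm_restrict hE]
  have := eLpNorm_le_of_ae_bound (p := 2) (μ := volume.restrict E)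
    (f := fun ξ => (M.m ξ : ℂ) * (𝐞 (-⟪ξ, x⟫) : ℂ)) (C := a) ?_
  · simpa using this
  · rw [ae_restrict_iff' hE]
    refine ae_of_all _ fun ξ hξ => ?_
    rw [norm_mul, Complex.norm_real, Real.norm_of_nonneg (M.pos ξ).le, Circle.norm_coe, mul_one]
    exact hm ξ hξ

lemma kf_memLp {E : Set (Rd d)} (hE : MeasurableSet E) (hv : volume E ≠ ∞) (x : Rd d) :
    MemLp (M.kf E x) 2 volume := by
  refine ⟨?_, (M.kf_eLpNorm hE (fun ξ _ => M.bound ξ) x).trans_lt ?_⟩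
  · refine AEStronglyMeasurable.indicator ?_ hE
    refine (Complex.measurable_ofReal.comp M.meas).aestronglyMeasurable.mul ?_
    have : Continuous (fun ξ : Rd d => (𝐞 (-⟪ξ, x⟫) : ℂ)) := by fun_prop
    exact this.aestronglyMeasurable
  · refine ENNReal.mul_lt_top ?_ ENNReal.ofReal_lt_top
    exact ENNReal.rpow_lt_top_of_nonneg (by norm_num) hv

lemma low_eq_inner {E : Set (Rd d)} (hE : MeasurableSet E) (hv : volume E ≠ ∞) (f : HH d)
    (x : Rd d) : M.low E f x = inner ℂ ((M.kf_memLp hE hv x).toLp) f := by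
  rw [L2.inner_def, low, fourierInv_eq]
  apply integral_congr_ae
  filter_upwards [(M.kf_memLp hE hv x).coeFn_toLp] with ξ hξ
  rw [hξ]
  unfold mf kf
  by_cases h : ξ ∈ E
  · rw [Set.indicator_of_mem h, Set.indicator_of_mem h]
    simp only [RCLike.inner_apply, map_mul, Complex.conj_ofReal, Circle.smul_def, smul_eq_mul]
    rw [← Circle.coe_inv_eq_conj, ← AddChar.map_neg_eq_inv, neg_neg]
    ring
  · simp [Set.indicator_of_notMem h]

lemma low_sub {E : Set (Rd d)} (hE : MeasurableSet E) (hv : volume E ≠ ∞) (f g : HH d)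
    (x : Rd d) : M.low E (f - g) x = M.low E f x - M.low E g x := by
  simp only [M.low_eq_inner hE hv, inner_sub_right]

lemma low_diff {E E' : Set (Rd d)} (hE : MeasurableSet E) (hE' : MeasurableSet E')
    (hv' : volume E' ≠ ∞) (hEE : E ⊆ E') (f : HH d) (x : Rd d) :
    M.low E' f x - M.low E f x = M.low (E' \ E) f x := by
  have hv : volume E ≠ ∞ := measure_ne_top_of_subset hEE hv'
  have hw : volume (E' \ E) ≠ ∞ := measure_ne_top_of_subset Set.sdiff_subset hv'
  have key : ∀ {F : Set (Rd d)}, MeasurableSet F → volume F ≠ ∞ →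
      Integrable (fun v => 𝐞 ⟪v, x⟫ • M.mf F f v) := by
    intro F hF hFv
    have := (M.mf_integrable hF hFv f)
    have h2 := (VectorFourier.fourierIntegral_convergent_iff (L := innerₗ (Rd d)) (μ := volume)
      continuous_fourierChar (by exact continuous_inner) (-x)).2 this
    simpa using h2
  unfold low
  simp only [fourierInv_eq]
  rw [← integral_sub (key hE' hv') (key hE hv)]
  congr 1; ext ξ
  rw [← smul_sub]
  congr 1
  unfold mf
  by_cases h1 : ξ ∈ E
  · simp [h1, hEE h1]
  · by_cases h2 : ξ ∈ E' <;> simp [h1, h2]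

lemma norm_kf_toLp {E : Set (Rd d)} (hE : MeasurableSet E) (hv : volume E ≠ ∞) {a : ℝ} (ha : 0 ≤ a)
    (hm : ∀ ξ ∈ E, M.m ξ ≤ a) (x : Rd d) :
    ‖(M.kf_memLp hE hv x).toLp‖ ≤ (volume E).toReal ^ (2⁻¹ : ℝ) * a := by
  rw [Lp.norm_toLp]
  refine ENNReal.toReal_le_of_le_ofReal (by positivity) ?_
  refine (M.kf_eLpNorm hE hm x).trans ?_
  rw [ENNReal.ofReal_mul (by positivity), ← ENNReal.ofReal_rpow_of_nonneg (by positivity)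
    (by norm_num), ENNReal.ofReal_toReal hv]

lemma low_sup {E : Set (Rd d)} (hE : MeasurableSet E) (hv : volume E ≠ ∞) {a : ℝ} (ha : 0 ≤ a)
    (hm : ∀ ξ ∈ E, M.m ξ ≤ a) (f : HH d) (x : Rd d) :
    ‖M.low E f x‖ ≤ (volume E).toReal ^ (2⁻¹ : ℝ) * a * ‖f‖ := by
  rw [M.low_eq_inner hE hv]
  refine (norm_inner_le_norm _ _).trans ?_
  gcongr
  exact M.norm_kf_toLp hE hv ha hm x

lemma low_continuous {E : Set (Rd d)} (hE : MeasurableSet E) (hv : volume E ≠ ∞) (f : HH d) :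
    Continuous (M.low E f) :=
  continuous_fourierInv_L1 (M.mf_integrable hE hv f)

lemma low_ae {E : Set (Rd d)} (hE : MeasurableSet E) (hv : volume E ≠ ∞) (f : HH d) :
    M.low E f =ᵐ[volume] ⇑(𝓕⁻ ((M.mf_memLp hE f).toLp) : HH d) :=
  fourierInv_L1L2 (M.mf_integrable hE hv f) (M.mf_memLp hE f)

lemma norm_fourierInv_L2 (h : HH d) : ‖(𝓕⁻ h : HH d)‖ = ‖h‖ := by
  rw [← Lp.norm_fourier_eq, FourierTransform.fourier_fourierInv_eq]

lemma low_eLpNorm_two {E : Set (Rd d)} (hE : MeasurableSet E) (hv : volume E ≠ ∞) {a : ℝ}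
    (ha : 0 ≤ a) (hm : ∀ ξ ∈ E, M.m ξ ≤ a) (f : HH d) :
    eLpNorm (M.low E f) 2 volume ≤ ENNReal.ofReal (a * ‖f‖) := by
  rw [eLpNorm_congr_ae (M.low_ae hE hv f), ← ENNReal.ofReal_toReal (Lp.eLpNorm_ne_top _),
    ← Lp.norm_def, norm_fourierInv_L2, Lp.norm_toLp, ENNReal.ofReal_toReal (M.mf_memLp hE f).2.ne]
  exact M.mf_eLpNorm ha hm f

end Mlt

lemma eLpNorm_interp {d : ℕ} {p : ℝ} (hp : 2 < p) (h : Rd d → ℂ) {B A : ℝ} (hB : 0 ≤ B)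
    (hA : 0 ≤ A) (hb : ∀ x, ‖h x‖ ≤ B) (h2 : eLpNorm h 2 volume ≤ ENNReal.ofReal A) :
    eLpNorm h (ENNReal.ofReal p) volume ≤ ENNReal.ofReal (B ^ (1 - 2 / p) * A ^ (2 / p)) := by
  have hp0 : 0 < p := by linarith
  rw [eLpNorm_eq_lintegral_rpow_enorm_toReal (by simpa using hp0) (by simp),
    ENNReal.toReal_ofReal hp0.le]
  have h3 : ∫⁻ x, ‖h x‖ₑ ^ (2 : ℝ) ≤ ENNReal.ofReal (A ^ (2:ℝ)) := by
    rw [eLpNorm_eq_lintegral_rpow_enorm_toReal (by norm_num) (by simp)] at h2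
    simp only [ENNReal.toReal_ofNat] at h2
    have := ENNReal.rpow_le_rpow h2 (z := 2) (by norm_num)
    rw [← ENNReal.rpow_mul] at this
    norm_num at this
    rw [← ENNReal.ofReal_rpow_of_nonneg hA (by norm_num)]
    simpa using this
  have h4 : ∫⁻ x, ‖h x‖ₑ ^ p ≤ ENNReal.ofReal (B ^ (p - 2)) * ENNReal.ofReal (A ^ (2:ℝ)) := by
    calc _ ≤ ∫⁻ x, ENNReal.ofReal (B ^ (p - 2)) * ‖h x‖ₑ ^ (2 : ℝ) := by
          apply lintegral_mono
          intro x
          have : p = (p - 2) + 2 := by ring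
          simp only
          conv_lhs => rw [this]
          rw [ENNReal.rpow_add_of_nonneg _ _ (by linarith) (by norm_num)]
          gcongr
          rw [← ENNReal.ofReal_rpow_of_nonneg hB (by linarith)]
          refine ENNReal.rpow_le_rpow ?_ (by linarith)
          rw [← ofReal_norm]
          exact ENNReal.ofReal_le_ofReal (hb x)
      _ = ENNReal.ofReal (B ^ (p - 2)) * ∫⁻ x, ‖h x‖ₑ ^ (2 : ℝ) :=
          lintegral_const_mul' _ _ (by simp)
      _ ≤ _ := by gcongr
  refine (ENNReal.rpow_le_rpow h4 (by positivity)).trans ?_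
  rw [← ENNReal.ofReal_mul (by positivity), ENNReal.ofReal_rpow_of_nonneg (by positivity)
    (by positivity)]
  apply ENNReal.ofReal_le_ofReal
  rw [Real.mul_rpow (by positivity) (by positivity), ← Real.rpow_mul hB, ← Real.rpow_mul hA]
  apply le_of_eq
  congr 2 <;> field_simp

namespace Mlt
variable {d : ℕ} (M : Mlt d)

/-- dyadic balls -/
def BB (d : ℕ) (j : ℕ) : Set (Rd d) := Metric.ball 0 (2 ^ j)

lemma BB_meas (j : ℕ) : MeasurableSet (BB d j) := measurableSet_ball

lemma BB_vol (j : ℕ) : volume (BB d j) ≠ ∞ := measure_ball_lt_top.ne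

lemma BB_mono {i j : ℕ} (h : i ≤ j) : BB d i ⊆ BB d j :=
  Metric.ball_subset_ball (pow_le_pow_right₀ (by norm_num) h)

lemma BB_vol_eq (j : ℕ) : (volume (BB d j)).toReal =
    (2 ^ d) ^ j * (volume (Metric.ball (0 : Rd d) 1)).toReal := by
  unfold BB
  rw [Measure.addHaar_ball_of_pos _ _ (by positivity)]
  rw [ENNReal.toReal_mul, ENNReal.toReal_ofReal (by positivity), finrank_euclideanSpace_fin]
  rw [← pow_mul, ← pow_mul, mul_comm j]

/-- the rate -/
def rr (p : ℝ) : ℝ := M.q * ((2 : ℝ) ^ d) ^ (1 / 2 - 1 / p)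

/-- the constant -/
def CC (p : ℝ) : ℝ := M.K * (2 ^ d * (volume (Metric.ball (0 : Rd d) 1)).toReal) ^ (1 / 2 - 1 / p)

lemma rr_pos (p : ℝ) : 0 < M.rr p := by
  have := M.q_pos
  unfold rr; positivity

lemma CC_nonneg (p : ℝ) : 0 ≤ M.CC p := by
  have := M.K_pos
  unfold CC; positivity

lemma low_Lp {p : ℝ} (hp : 2 < p) {E : Set (Rd d)} (hE : MeasurableSet E) (hv : volume E ≠ ∞)
    {a : ℝ} (ha : 0 ≤ a) (hm : ∀ ξ ∈ E, M.m ξ ≤ a) (f : HH d) :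
    eLpNorm (M.low E f) (ENNReal.ofReal p) volume ≤
      ENNReal.ofReal ((volume E).toReal ^ (1 / 2 - 1 / p) * a * ‖f‖) := by
  refine (eLpNorm_interp hp _ (by positivity) (by positivity) (M.low_sup hE hv ha hm f)
    (M.low_eLpNorm_two hE hv ha hm f)).trans ?_
  apply ENNReal.ofReal_le_ofReal
  apply le_of_eq
  have hp0 : 0 < p := by linarith
  have h1 : 0 ≤ 1 - 2 / p := by
    rw [sub_nonneg, div_le_one hp0]; exact hp.le
  rw [mul_assoc, Real.mul_rpow (by positivity) (by positivity), mul_assoc,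
    ← Real.rpow_add_of_nonneg (by positivity) h1 (by positivity), ← Real.rpow_mul (by positivity)]
  rw [show 1 - 2 / p + 2 / p = 1 by ring, Real.rpow_one, mul_assoc]
  congr 2
  ring

lemma low_annulus {p : ℝ} (hp : 2 < p) (f : HH d) (j : ℕ) :
    eLpNorm (M.low (BB d (j + 1)) f - M.low (BB d j) f) (ENNReal.ofReal p) volume ≤
      ENNReal.ofReal (M.CC p * M.rr p ^ j * ‖f‖) := by
  have e : M.low (BB d (j + 1)) f - M.low (BB d j) f = M.low (BB d (j + 1) \ BB d j) f := by
    ext x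
    exact M.low_diff (BB_meas j) (BB_meas (j + 1)) (BB_vol _) (BB_mono (by omega)) f x
  rw [e]
  have hK := M.K_pos
  have hq := M.q_pos
  have hθ : 0 ≤ 1 / 2 - 1 / p := by
    rw [sub_nonneg]; exact one_div_le_one_div_of_le (by norm_num) hp.le
  refine (M.low_Lp hp ((BB_meas _).diff (BB_meas _))
    (measure_ne_top_of_subset Set.sdiff_subset (BB_vol (j + 1))) (a := M.K * M.q ^ j)
    (by positivity) ?_ f).trans ?_
  · intro ξ hξ
    apply M.dec
    have := hξ.2
    simpa [BB] using this
  apply ENNReal.ofReal_le_ofReal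
  have h1 : (volume (BB d (j + 1) \ BB d j)).toReal ≤ (volume (BB d (j + 1))).toReal :=
    ENNReal.toReal_mono (BB_vol _) (measure_mono Set.sdiff_subset)
  rw [BB_vol_eq] at h1
  calc _ ≤ ((2 ^ d) ^ (j + 1) * (volume (Metric.ball (0 : Rd d) 1)).toReal) ^ (1 / 2 - 1 / p)
      * (M.K * M.q ^ j) * ‖f‖ := by gcongr
    _ = _ := by
      unfold CC rr
      have e1 : ((2 : ℝ) ^ d) ^ (j + 1) * (volume (Metric.ball (0 : Rd d) 1)).toReal =
          (2 ^ d) ^ j * (2 ^ d * (volume (Metric.ball (0 : Rd d) 1)).toReal) := by ring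
      have e2 : (((2 : ℝ) ^ d) ^ j) ^ (1 / 2 - 1 / p) = (((2 : ℝ) ^ d) ^ (1 / 2 - 1 / p)) ^ j := by
        rw [← Real.rpow_natCast (((2:ℝ) ^ d) ^ (1 / 2 - 1 / p)) j, ← Real.rpow_mul (by positivity),
          mul_comm _ (j : ℝ), Real.rpow_mul (by positivity) (j : ℝ), Real.rpow_natCast]
      rw [e1, Real.mul_rpow (by positivity) (by positivity), e2, mul_pow]
      ring

lemma low_range {p : ℝ} (hp : 2 < p) (f : HH d) (J n : ℕ) :
    eLpNorm (M.low (BB d (J + n)) f - M.low (BB d J) f) (ENNReal.ofReal p) volume ≤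
      ENNReal.ofReal (M.CC p * (∑ i ∈ Finset.range n, M.rr p ^ (J + i)) * ‖f‖) := by
  have hC := M.CC_nonneg p
  have hr := M.rr_pos p
  induction n with
  | zero => simp
  | succ n ih =>
    have e : M.low (BB d (J + (n + 1))) f - M.low (BB d J) f =
      (M.low (BB d (J + n + 1)) f - M.low (BB d (J + n)) f) +
        (M.low (BB d (J + n)) f - M.low (BB d J) f) := by
      rw [add_assoc]; abel
    rw [e]
    have c1 : ∀ i, AEStronglyMeasurable (M.low (BB d i) f) volume := fun i =>
      (M.low_continuous (BB_meas i) (BB_vol i) f).aestronglyMeasurable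
    refine (eLpNorm_add_le ((c1 _).sub (c1 _)) ((c1 _).sub (c1 _)) ?_).trans ?_
    · rw [← ENNReal.ofReal_one]; exact ENNReal.ofReal_le_ofReal (by linarith)
    refine (add_le_add (M.low_annulus hp f (J + n)) ih).trans ?_
    rw [← ENNReal.ofReal_add (by positivity) (by positivity)]
    apply ENNReal.ofReal_le_ofReal
    rw [Finset.sum_range_succ]
    apply le_of_eq; ring

lemma low_range' {p : ℝ} (hp : 2 < p) (hr1 : M.rr p < 1) (f : HH d) {J j : ℕ} (h : J ≤ j) :
    eLpNorm (M.low (BB d j) f - M.low (BB d J) f) (ENNReal.ofReal p) volume ≤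
      ENNReal.ofReal (M.CC p * (M.rr p ^ J * (1 - M.rr p)⁻¹) * ‖f‖) := by
  obtain ⟨n, rfl⟩ := Nat.exists_eq_add_of_le h
  refine (M.low_range hp f J n).trans (ENNReal.ofReal_le_ofReal ?_)
  have hC := M.CC_nonneg p
  have hr := M.rr_pos p
  gcongr
  simp_rw [pow_add]
  rw [← Finset.mul_sum]
  gcongr
  rw [← tsum_geometric_of_lt_one hr.le hr1]
  exact (summable_geometric_of_lt_one hr.le hr1).sum_le_tsum _ (fun i _ => by positivity)

lemma L2_fourierInv_sub (f g : HH d) : (𝓕⁻ (f - g) : HH d) = 𝓕⁻ f - 𝓕⁻ g :=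
  map_sub (Lp.fourierTransformₗᵢ (Rd d) ℂ).symm f g

/-- the operator -/
def T (f : HH d) : HH d := 𝓕⁻ ((M.mf_memLp MeasurableSet.univ f).toLp)

lemma T_sub (f g : HH d) : M.T (f - g) = M.T f - M.T g := by
  unfold T
  rw [← L2_fourierInv_sub, ← MemLp.toLp_sub]
  congr 1
  rw [MemLp.toLp_eq_toLp_iff]
  filter_upwards [Lp.coeFn_sub f g] with x hx
  simp only [mf, Set.indicator_univ, Pi.sub_apply, hx]
  ring

lemma low_T_two (f : HH d) (j : ℕ) :
    eLpNorm (M.low (BB d j) f - ⇑(M.T f)) 2 volume ≤ ENNReal.ofReal (M.K * M.q ^ j * ‖f‖) := by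
  have e1 : M.low (BB d j) f - ⇑(M.T f) =ᵐ[volume]
      ⇑(𝓕⁻ ((M.mf_memLp (BB_meas j) f).toLp) - M.T f : HH d) := by
    filter_upwards [M.low_ae (BB_meas j) (BB_vol j) f,
      Lp.coeFn_sub (𝓕⁻ ((M.mf_memLp (BB_meas j) f).toLp)) (M.T f)] with x h1 h2
    rw [h2, Pi.sub_apply, Pi.sub_apply, h1]
  have hK := M.K_pos
  have hq := M.q_pos
  rw [eLpNorm_congr_ae e1, ← ENNReal.ofReal_toReal (Lp.eLpNorm_ne_top _),
    ← Lp.norm_def]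
  unfold T
  rw [← L2_fourierInv_sub, norm_fourierInv_L2, ← MemLp.toLp_sub, Lp.norm_toLp,
    ENNReal.ofReal_toReal (MemLp.sub (M.mf_memLp (BB_meas j) f) 
      (M.mf_memLp MeasurableSet.univ f)).2.ne]
  have e2 : M.mf (BB d j) f - M.mf Set.univ f = - M.mf (BB d j)ᶜ f := by
    ext ξ
    simp only [mf, Pi.sub_apply, Pi.neg_apply]
    by_cases h : ξ ∈ BB d j <;> simp [h]
  rw [e2, eLpNorm_neg]
  refine M.mf_eLpNorm (by positivity) ?_ f
  intro ξ hξ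
  apply M.dec
  simpa [BB] using hξ

lemma low_tendsto_two (f : HH d) :
    Tendsto (fun j => eLpNorm (M.low (BB d j) f - ⇑(M.T f)) 2 volume) atTop (𝓝 0) := by
  refine tendsto_of_tendsto_of_tendsto_of_le_of_le tendsto_const_nhds ?_ (fun _ => zero_le)
    (M.low_T_two f)
  have : Tendsto (fun j : ℕ => M.K * M.q ^ j * ‖f‖) atTop (𝓝 (M.K * 0 * ‖f‖)) :=
    ((tendsto_pow_atTop_nhds_zero_of_lt_one M.q_pos.le M.q_lt).const_mul _).mul_const _
  have h2 := ENNReal.tendsto_ofReal this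
  simpa using h2

lemma low_aesm (f : HH d) (j : ℕ) : AEStronglyMeasurable (M.low (BB d j) f) volume :=
  (M.low_continuous (BB_meas j) (BB_vol j) f).aestronglyMeasurable

lemma low_exists_ae (f : HH d) : ∃ ns : ℕ → ℕ, StrictMono ns ∧
    ∀ᵐ x, Tendsto (fun i => M.low (BB d (ns i)) f x) atTop (𝓝 (M.T f x)) :=
  (tendstoInMeasure_of_tendsto_eLpNorm (by norm_num) (M.low_aesm f) (Lp.aestronglyMeasurable _)
    (M.low_tendsto_two f)).exists_seq_tendsto_ae

lemma tail {p : ℝ} (hp : 2 < p) (hr1 : M.rr p < 1) (f : HH d) (J : ℕ) :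
    eLpNorm (⇑(M.T f) - M.low (BB d J) f) (ENNReal.ofReal p) volume ≤
      ENNReal.ofReal (M.CC p * (M.rr p ^ J * (1 - M.rr p)⁻¹) * ‖f‖) := by
  obtain ⟨ns, hns, hae⟩ := M.low_exists_ae f
  have h := Lp.eLpNorm_lim_le_liminf_eLpNorm (p := ENNReal.ofReal p) (μ := volume)
    (f := fun i => M.low (BB d (ns i)) f - M.low (BB d J) f)
    (fun i => (M.low_aesm f _).sub (M.low_aesm f _)) (⇑(M.T f) - M.low (BB d J) f) (by
      filter_upwards [hae] with x hx
      simpa using hx.sub_const _)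
  refine h.trans ?_
  refine liminf_le_of_frequently_le' (Eventually.frequently ?_)
  filter_upwards [hns.tendsto_atTop.eventually_ge_atTop J] with i hi
  exact M.low_range' hp hr1 f hi

lemma low_zero_Lp {p : ℝ} (hp : 2 < p) (f : HH d) (J : ℕ) : 
    eLpNorm (M.low (BB d J) f) (ENNReal.ofReal p) volume ≤
      ENNReal.ofReal ((volume (BB d J)).toReal ^ (1 / 2 - 1 / p) * M.K * ‖f‖) :=
  M.low_Lp hp (BB_meas J) (BB_vol J) M.K_pos.le (fun ξ _ => M.bound ξ) f

lemma T_bound {p : ℝ} (hp : 2 < p) (hr1 : M.rr p < 1) : ∃ A : ℝ, 0 ≤ A ∧ ∀ f : HH d,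
    eLpNorm (M.T f) (ENNReal.ofReal p) volume ≤ ENNReal.ofReal (A * ‖f‖) := by
  have hC := M.CC_nonneg p
  have hr := M.rr_pos p
  have hK := M.K_pos
  have hi : 0 ≤ (1 - M.rr p)⁻¹ := by rw [inv_nonneg]; linarith
  refine ⟨M.CC p * (M.rr p ^ 0 * (1 - M.rr p)⁻¹) + 
    (volume (BB d 0)).toReal ^ (1 / 2 - 1 / p) * M.K, by positivity, fun f => ?_⟩
  have e : (⇑(M.T f) : Rd d → ℂ) = (⇑(M.T f) - M.low (BB d 0) f) + M.low (BB d 0) f := by abel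
  rw [e]
  refine (eLpNorm_add_le ((Lp.aestronglyMeasurable _).sub (M.low_aesm f _)) (M.low_aesm f _)
    ?_).trans ?_
  · rw [← ENNReal.ofReal_one]; exact ENNReal.ofReal_le_ofReal (by linarith)
  refine (add_le_add (M.tail hp hr1 f 0) (M.low_zero_Lp hp f 0)).trans ?_
  rw [← ENNReal.ofReal_add (by positivity) (by positivity)]
  apply ENNReal.ofReal_le_ofReal
  apply le_of_eq; ring

end Mlt

lemma orbit_aux {d : ℕ} (a b : ℝ) (i0 i1 i2 i3 : Fin d) (h01 : i0 ≠ i1) (h02 : i0 ≠ i2)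
    (h03 : i0 ≠ i3) (h12 : i1 ≠ i2) (h13 : i1 ≠ i3) (h23 : i2 ≠ i3) :
    ∃ v w : Rd d, ∀ c s : ℝ, ∀ i, ((c • v + s • w) i) ^ 2 =
      (if i = i0 then c ^ 2 * a ^ 2 else 0) + (if i = i1 then s ^ 2 * a ^ 2 else 0) +
      (if i = i2 then c ^ 2 * b ^ 2 else 0) + (if i = i3 then s ^ 2 * b ^ 2 else 0) := by
  refine ⟨WithLp.toLp 2 (fun i => if i = i0 then a else if i = i2 then b else 0),
    WithLp.toLp 2 (fun i => if i = i1 then a else if i = i3 then b else 0), fun c s i => ?_⟩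
  simp only [PiLp.add_apply, PiLp.smul_apply, smul_eq_mul]
  by_cases h0 : i = i0
  · subst h0; simp [h01, h02, h03]; ring
  by_cases h1 : i = i1
  · subst h1; simp [h12, h13, h0]; ring
  by_cases h2 : i = i2
  · subst h2; simp [h23, h0, h1]; ring
  by_cases h3 : i = i3
  · subst h3; simp [h0, h1, h2]; ring
  simp [h0, h1, h2, h3]

lemma orbit_aux' {d : ℕ} (a : ℝ) (i0 i1 : Fin d) (h01 : i0 ≠ i1) :
    ∃ v w : Rd d, ∀ c s : ℝ, ∀ i, ((c • v + s • w) i) ^ 2 =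
      (if i = i0 then c ^ 2 * a ^ 2 else 0) + (if i = i1 then s ^ 2 * a ^ 2 else 0) := by
  refine ⟨WithLp.toLp 2 (fun i => if i = i0 then a else 0),
    WithLp.toLp 2 (fun i => if i = i1 then a else 0), fun c s i => ?_⟩
  simp only [PiLp.add_apply, PiLp.smul_apply, smul_eq_mul]
  by_cases h0 : i = i0
  · subst h0; simp [h01]; ring
  by_cases h1 : i = i1
  · subst h1; simp [h0]; ring
  simp [h0, h1]

lemma blockSq_nonneg (d k : ℕ) (x : Rd d) : 0 ≤ blockSq d k x := by
  unfold blockSq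
  apply Finset.sum_nonneg
  intro i _
  split_ifs <;> positivity

lemma norm_sq_Rd {d : ℕ} (x : Rd d) : ‖x‖ ^ 2 = ∑ i, x i ^ 2 := by
  rw [EuclideanSpace.norm_sq_eq]
  simp

lemma blockSq_le (d k : ℕ) (x : Rd d) : blockSq d k x ≤ ‖x‖ ^ 2 := by
  unfold blockSq
  rw [norm_sq_Rd]
  apply Finset.sum_le_sum
  intro i _
  split_ifs
  · exact le_rfl
  · positivity

lemma blockSq_self (d : ℕ) (x : Rd d) : blockSq d d x = 0 := by
  unfold blockSq
  simp

/-- blocks have dimension zero or at least two. -/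
def Good (d k : ℕ) : Prop := (2 ≤ k ∧ k + 2 ≤ d) ∨ (k = d ∧ 2 ≤ d)

lemma orbit {d k : ℕ} (hk : Good d k) (x : Rd d) : ∃ v w : Rd d, ∀ c s : ℝ,
    blockSq d k (c • v + s • w) = (c ^ 2 + s ^ 2) * blockSq d k x ∧
    ‖c • v + s • w‖ ^ 2 = (c ^ 2 + s ^ 2) * ‖x‖ ^ 2 := by
  rcases hk with ⟨h1, h2⟩ | ⟨rfl, h2⟩
  · obtain ⟨v, w, h⟩ := orbit_aux (√(blockSq d k x)) (√(‖x‖ ^ 2 - blockSq d k x))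
      (⟨0, by omega⟩ : Fin d) ⟨1, by omega⟩ ⟨d - 1, by omega⟩ ⟨d - 2, by omega⟩
      (by simp) (by simp; omega) (by simp; omega)
      (by simp; omega) (by simp; omega) (by simp; omega)
    rw [Real.sq_sqrt (blockSq_nonneg d k x), Real.sq_sqrt (by linarith [blockSq_le d k x])] at h
    refine ⟨v, w, fun c s => ⟨?_, ?_⟩⟩
    · conv_lhs => unfold blockSq
      have : ∀ i : Fin d, (if (i : ℕ) < d - k then ((c • v + s • w) i) ^ 2 else 0) =
        (if i = ⟨0, by omega⟩ then c ^ 2 * blockSq d k x else 0) +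
        (if i = ⟨1, by omega⟩ then s ^ 2 * blockSq d k x else 0) := by
        intro i
        rw [h c s i]
        by_cases hi : (i : ℕ) < d - k
        · have h3 : i ≠ ⟨d - 1, by omega⟩ := by
            intro h; have := congrArg Fin.val h; simp at this; omega
          have h4 : i ≠ ⟨d - 2, by omega⟩ := by
            intro h; have := congrArg Fin.val h; simp at this; omega
          rw [if_pos hi, if_neg h3, if_neg h4]; ring
        · have h3 : i ≠ ⟨0, by omega⟩ := by
            intro h; have := congrArg Fin.val h; simp at this; omega
          have h4 : i ≠ ⟨1, by omega⟩ := by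
            intro h; have := congrArg Fin.val h; simp at this; omega
          rw [if_neg hi, if_neg h3, if_neg h4]; ring
      simp_rw [this, Finset.sum_add_distrib, Finset.sum_ite_eq', Finset.mem_univ, if_true]
      ring
    · rw [norm_sq_Rd]
      simp_rw [h, Finset.sum_add_distrib, Finset.sum_ite_eq', Finset.mem_univ, if_true]
      ring
  · obtain ⟨v, w, h⟩ := orbit_aux' ‖x‖ (⟨0, by omega⟩ : Fin k) ⟨1, by omega⟩ (by simp)
    refine ⟨v, w, fun c s => ⟨?_, ?_⟩⟩
    · simp [blockSq_self]
    · rw [norm_sq_Rd]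
      simp_rw [h, Finset.sum_add_distrib, Finset.sum_ite_eq', Finset.mem_univ, if_true]
      ring

namespace Mlt
variable {d : ℕ} (M : Mlt d)

/-- symmetric profiles. -/
def Sym (k : ℕ) (f : HH d) : Prop := ∀ (j : ℕ) (x y : Rd d),
  blockSq d k x = blockSq d k y → ‖x‖ = ‖y‖ → M.low (BB d j) f x = M.low (BB d j) f y

/-- kernel as an element of the Hilbert space -/
def kk (j : ℕ) (x : Rd d) : HH d := (M.kf_memLp (BB_meas j) (BB_vol j) x).toLp

lemma low_inner (j : ℕ) (f : HH d) (x : Rd d) :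
    M.low (BB d j) f x = inner ℂ (M.kk j x) f :=
  M.low_eq_inner (BB_meas j) (BB_vol j) f x

/-- squared multiplier -/
def m2 (j : ℕ) : Rd d → ℂ := (BB d j).indicator (fun ξ => ((M.m ξ ^ 2 : ℝ) : ℂ))

lemma m2_integrable (j : ℕ) : Integrable (M.m2 j) volume := by
  unfold m2
  have : IsFiniteMeasure (volume.restrict (BB d j)) := 
    ⟨by simpa using lt_top_iff_ne_top.2 (BB_vol (d := d) j)⟩
  apply IntegrableOn.integrable_indicator _ (BB_meas j)
  refine Integrable.of_bound ?_ (M.K ^ 2) (ae_of_all _ fun ξ => ?_)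
  · exact (Complex.measurable_ofReal.comp (M.meas.pow_const 2)).aestronglyMeasurable
  · rw [Complex.norm_real, Real.norm_of_nonneg (by positivity)]
    exact pow_le_pow_left₀ (M.pos ξ).le (M.bound ξ) 2

lemma kk_inner (j : ℕ) (x y : Rd d) : inner ℂ (M.kk j x) (M.kk j y) = 𝓕 (M.m2 j) (y - x) := by
  rw [L2.inner_def, fourier_eq]
  apply integral_congr_ae
  filter_upwards [(M.kf_memLp (BB_meas j) (BB_vol j) x).coeFn_toLp,
    (M.kf_memLp (BB_meas j) (BB_vol j) y).coeFn_toLp] with ξ h1 h2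
  unfold kk
  rw [h1, h2]
  unfold kf m2
  by_cases h : ξ ∈ BB d j
  · rw [Set.indicator_of_mem h, Set.indicator_of_mem h, Set.indicator_of_mem h]
    simp only [RCLike.inner_apply, map_mul, Complex.conj_ofReal, Circle.smul_def, smul_eq_mul]
    rw [← Circle.coe_inv_eq_conj, ← AddChar.map_neg_eq_inv, neg_neg, inner_sub_right,
      neg_sub, sub_eq_neg_add, AddChar.map_add_eq_mul]
    push_cast
    ring
  · simp [Set.indicator_of_notMem h]

lemma kk_far (j : ℕ) {δ : ℝ} (hδ : 0 < δ) : ∃ R : ℝ, ∀ x y : Rd d, R ≤ ‖y - x‖ →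
    ‖inner ℂ (M.kk j x) (M.kk j y)‖ ≤ δ := by
  have h := tendsto_integral_exp_inner_smul_cocompact (V := Rd d) (M.m2 j)
  rw [← Metric.cobounded_eq_cocompact, ← comap_norm_atTop] at h
  have h2 := h.eventually (Metric.closedBall_mem_nhds (0 : ℂ) hδ)
  rw [eventually_comap, eventually_atTop] at h2
  obtain ⟨R, hR⟩ := h2
  refine ⟨R, fun x y hxy => ?_⟩
  rw [kk_inner, fourier_eq]
  have := hR _ hxy _ rfl
  simpa using this

lemma kk_near (j : ℕ) {δ : ℝ} (hδ : 0 < δ) : ∃ ρ > 0, ∀ x y : Rd d, ‖y - x‖ < ρ →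
    ‖M.kk j x - M.kk j y‖ ≤ δ := by
  have hc : Continuous (𝓕 (M.m2 j)) := VectorFourier.fourierIntegral_continuous
    continuous_fourierChar (by exact continuous_inner) (M.m2_integrable j)
  have h0 : (0:ℝ) < δ ^ 2 / 2 := by positivity
  obtain ⟨ρ, hρ, h⟩ := Metric.continuousAt_iff.1 (hc.continuousAt (x := 0)) _ h0
  refine ⟨ρ, hρ, fun x y hxy => ?_⟩
  have h1 := h (x := y - x) (by simpa using hxy)
  rw [dist_eq_norm] at h1
  have e := @norm_sub_sq ℂ (HH d) _ _ _ (M.kk j x) (M.kk j y)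
  have n : ∀ z, ‖M.kk j z‖ ^ 2 = (𝓕 (M.m2 j) 0).re := by
    intro z
    rw [← @inner_self_eq_norm_sq ℂ, kk_inner, sub_self]; rfl
  rw [n, n, kk_inner] at e
  have h2 := (Complex.abs_re_le_norm _).trans h1.le
  rw [abs_le, Complex.sub_re] at h2
  refine abs_le_of_sq_le_sq' ?_ hδ.le |>.2
  rw [e]
  change _ - 2 * (𝓕 (M.m2 j) (y - x)).re + _ ≤ _
  linarith [h2.1]

lemma decay {k : ℕ} (hk : Good d k) (j : ℕ) {η : ℝ} (hη : 0 < η) : ∃ R : ℝ, ∀ f : HH d,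
    M.Sym k f → ∀ x, R ≤ ‖x‖ → ‖M.low (BB d j) f x‖ ≤ η * ‖f‖ := by
  set κ := ‖𝓕 (M.m2 j) 0‖ with hκ
  obtain ⟨N0, hN0⟩ := exists_nat_gt (κ / (η ^ 2 / 2))
  set N := N0 + 1 with hN
  have hNpos : (0:ℝ) < N := by positivity
  have hNκ : κ ≤ N * (η ^ 2 / 2) := by
    rw [div_lt_iff₀ (by positivity)] at hN0
    have : (N0:ℝ) ≤ N := by rw [hN]; push_cast; linarith
    nlinarith [sq_nonneg η]
  obtain ⟨R, hR⟩ := M.kk_far j (δ := η ^ 2 / 2) (by positivity)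
  refine ⟨N * |R|, fun f hf x hx => ?_⟩
  obtain ⟨v, w, hvw⟩ := orbit hk x
  let c : Fin N → ℝ := fun i => (i : ℝ) / N
  let s : Fin N → ℝ := fun i => √(1 - c i ^ 2)
  let P : Fin N → Rd d := fun i => c i • v + s i • w
  have hcs : ∀ i, c i ^ 2 + s i ^ 2 = 1 := by
    intro i
    have hc0 : 0 ≤ c i := by positivity
    have hc1 : c i ≤ 1 := by
      rw [div_le_one hNpos]; exact_mod_cast i.2.le
    rw [Real.sq_sqrt (by nlinarith)]; ring
  have hP : ∀ i, M.low (BB d j) f x = inner ℂ (M.kk j (P i)) f := by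
    intro i
    rw [← low_inner]
    obtain ⟨h1, h2⟩ := hvw (c i) (s i)
    rw [hcs i, one_mul] at h1 h2
    apply hf
    · exact h1.symm
    · exact ((sq_eq_sq₀ (norm_nonneg _) (norm_nonneg _)).1 h2).symm
  have hfar : ∀ i i', i ≠ i' → ‖inner ℂ (M.kk j (P i)) (M.kk j (P i'))‖ ≤ η ^ 2 / 2 := by
    intro i i' hne
    apply hR
    have e : P i' - P i = (c i' - c i) • v + (s i' - s i) • w := by
      simp only [P, sub_smul]; abel
    have h2 := (hvw (c i' - c i) (s i' - s i)).2
    rw [← e] at h2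
    have h3 : (1 : ℝ) / N ≤ |c i' - c i| := by
      simp only [c]
      rw [← sub_div, abs_div, abs_of_pos hNpos]
      gcongr
      have : (1 : ℤ) ≤ |((i' : ℕ) : ℤ) - ((i : ℕ) : ℤ)| := by
        apply Int.one_le_abs
        intro h
        apply hne
        ext; omega
      exact_mod_cast this
    have h4 : (1 / N * ‖x‖) ^ 2 ≤ ‖P i' - P i‖ ^ 2 := by
      rw [h2, mul_pow]
      gcongr
      have : (1 / (N:ℝ)) ^ 2 ≤ (c i' - c i) ^ 2 := by
        rw [← sq_abs (c i' - c i)]; gcongr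
      nlinarith [sq_nonneg (s i' - s i)]
    have h5 := (abs_le_of_sq_le_sq' h4 (norm_nonneg _)).2
    refine le_trans ?_ h5
    calc R ≤ |R| := le_abs_self R
      _ = 1 / N * (N * |R|) := by field_simp
      _ ≤ _ := by gcongr
  have hdiag : ∀ i, ‖inner ℂ (M.kk j (P i)) (M.kk j (P i))‖ = κ := by
    intro i; rw [kk_inner, sub_self]
  set S := ∑ i, M.kk j (P i) with hS
  have hSn : ‖S‖ ^ 2 ≤ (N * η) ^ 2 := by
    have h1 : ‖S‖ ^ 2 ≤ ∑ i, ∑ i', ‖inner ℂ (M.kk j (P i)) (M.kk j (P i'))‖ := by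
      rw [← @inner_self_eq_norm_sq ℂ, hS, sum_inner]
      simp_rw [inner_sum]
      refine (Complex.re_le_norm _).trans ?_
      refine (norm_sum_le _ _).trans ?_
      exact Finset.sum_le_sum fun i _ => norm_sum_le _ _
    refine h1.trans ?_
    have h2 : ∀ i, ∑ i', ‖inner ℂ (M.kk j (P i)) (M.kk j (P i'))‖ ≤ N * η ^ 2 := by
      intro i
      calc _ ≤ ∑ i' : Fin N, ((if i' = i then κ else 0) + η ^ 2 / 2) := by
            apply Finset.sum_le_sum
            intro i' _
            by_cases h : i' = i
            · subst h; rw [hdiag, if_pos rfl]; nlinarith [sq_nonneg η]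
            · rw [if_neg h, zero_add]; exact hfar _ _ (Ne.symm h)
        _ = κ + N * (η ^ 2 / 2) := by
            rw [Finset.sum_add_distrib]
            simp
        _ ≤ _ := by linarith
    calc _ ≤ ∑ i : Fin N, N * η ^ 2 := Finset.sum_le_sum fun i _ => h2 i
      _ = _ := by simp; ring
  have hSn' := (abs_le_of_sq_le_sq' hSn (by positivity)).2
  have h6 : (N : ℂ) * M.low (BB d j) f x = inner ℂ S f := by
    rw [hS, sum_inner, ← Finset.sum_congr rfl (fun i _ => hP i)]
    simp
  have h7 : N * ‖M.low (BB d j) f x‖ ≤ N * (η * ‖f‖) := by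
    have : N * ‖M.low (BB d j) f x‖ = ‖inner ℂ S f‖ := by
      rw [← h6, norm_mul]; simp
    rw [this, ← mul_assoc]
    exact (norm_inner_le_norm _ _).trans (by gcongr)
  exact le_of_mul_le_mul_left h7 hNpos

lemma unif {k : ℕ} (hk : Good d k) (j : ℕ) {ι : Type*} {l : Filter ι} {f : ι → HH d} {B : ℝ}
    (hS : ∀ i, M.Sym k (f i)) (hB : ∀ i, ‖f i‖ ≤ B) (hB0 : 0 < B)
    (hw : ∀ h : HH d, Tendsto (fun i => inner ℂ h (f i)) l (𝓝 0)) {η : ℝ} (hη : 0 < η) :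
    ∀ᶠ i in l, ∀ x, ‖M.low (BB d j) (f i) x‖ ≤ η := by
  obtain ⟨R, hR⟩ := M.decay hk j (η := η / B) (by positivity)
  obtain ⟨ρ, hρ, hnear⟩ := M.kk_near j (δ := η / 2 / B) (by positivity)
  obtain ⟨t, -, htf, htc⟩ := (isCompact_closedBall (0 : Rd d) R).finite_cover_balls hρ
  have hev : ∀ᶠ i in l, ∀ y ∈ t, ‖inner ℂ (M.kk j y) (f i)‖ ≤ η / 2 := by
    rw [eventually_all_finite htf]
    intro y _
    have := (hw (M.kk j y)).eventually (Metric.closedBall_mem_nhds (0:ℂ) (half_pos hη))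
    simpa using this
  filter_upwards [hev] with i hi x
  by_cases hx : R ≤ ‖x‖
  · refine (hR (f i) (hS i) x hx).trans ?_
    calc _ ≤ η / B * B := by gcongr; exact hB i
      _ = η := by field_simp
  · have hxm : x ∈ Metric.closedBall (0 : Rd d) R := by simpa using (not_le.1 hx).le
    have := htc hxm
    simp only [Set.mem_iUnion, Metric.mem_ball, dist_eq_norm] at this
    obtain ⟨y, hy, hxy⟩ := this
    rw [low_inner]
    have e : inner ℂ (M.kk j x) (f i) = inner ℂ (M.kk j y) (f i) -
        inner ℂ (M.kk j y - M.kk j x) (f i) := by rw [inner_sub_left]; ring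
    rw [e]
    refine (norm_sub_le _ _).trans ?_
    have h1 : ‖inner ℂ (M.kk j y - M.kk j x) (f i)‖ ≤ η / 2 / B * B :=
      (norm_inner_le_norm _ _).trans (by gcongr; exact hnear y x hxy; exact hB i)
    have h2 : η / 2 / B * B = η / 2 := by field_simp
    linarith [hi y hy]

lemma compact {p : ℝ} (hp : 2 < p) (hr1 : M.rr p < 1)
    {k : ℕ} (hk : Good d k) {ι : Type*} {l : Filter ι} {f : ι → HH d} {B : ℝ}
    (hS : ∀ i, M.Sym k (f i)) (hB : ∀ i, ‖f i‖ ≤ B) (hB0 : 0 < B)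
    (hw : ∀ h : HH d, Tendsto (fun i => inner ℂ h (f i)) l (𝓝 0)) {τ : ℝ} (hτ : 0 < τ) :
    ∀ᶠ i in l, eLpNorm (M.T (f i)) (ENNReal.ofReal p) volume ≤ ENNReal.ofReal τ := by
  have hC := M.CC_nonneg p
  have hr := M.rr_pos p
  have hK := M.K_pos
  have hi : 0 ≤ (1 - M.rr p)⁻¹ := by rw [inv_nonneg]; linarith
  obtain ⟨J, hJ⟩ : ∃ J : ℕ, M.CC p * (M.rr p ^ J * (1 - M.rr p)⁻¹) * B < τ / 2 := by
    have : Tendsto (fun J : ℕ => M.CC p * (M.rr p ^ J * (1 - M.rr p)⁻¹) * B) atTop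
        (𝓝 (M.CC p * (0 * (1 - M.rr p)⁻¹) * B)) :=
      (((tendsto_pow_atTop_nhds_zero_of_lt_one hr.le hr1).mul_const _).const_mul _).mul_const _
    rw [zero_mul, mul_zero, zero_mul] at this
    exact (this.eventually_lt_const (half_pos hτ)).exists
  have hθ : 0 < 1 - 2 / p := by
    rw [sub_pos, div_lt_one (by linarith)]; exact hp
  obtain ⟨η, hη, hη2⟩ : ∃ η : ℝ, 0 < η ∧ η ^ (1 - 2 / p) * (M.K * B) ^ (2 / p) ≤ τ / 2 := by
    set D := (M.K * B) ^ (2 / p) with hD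
    have hDp : 0 < D := by positivity
    refine ⟨(τ / 2 / D) ^ (1 - 2 / p)⁻¹, by positivity, ?_⟩
    rw [← Real.rpow_mul (by positivity), inv_mul_cancel₀ hθ.ne', Real.rpow_one]
    apply le_of_eq; field_simp
  filter_upwards [M.unif hk J hS hB hB0 hw hη] with i hiu
  have e : (⇑(M.T (f i)) : Rd d → ℂ) =
    (⇑(M.T (f i)) - M.low (BB d J) (f i)) + M.low (BB d J) (f i) := by abel
  rw [e]
  refine (eLpNorm_add_le ((Lp.aestronglyMeasurable _).sub (M.low_aesm _ _)) (M.low_aesm _ _)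
    ?_).trans ?_
  · rw [← ENNReal.ofReal_one]; exact ENNReal.ofReal_le_ofReal (by linarith)
  have h1 : eLpNorm (⇑(M.T (f i)) - M.low (BB d J) (f i)) (ENNReal.ofReal p) volume ≤
      ENNReal.ofReal (τ / 2) := by
    refine (M.tail hp hr1 (f i) J).trans (ENNReal.ofReal_le_ofReal (le_trans ?_ hJ.le))
    gcongr
    exact hB i
  have h2 : eLpNorm (M.low (BB d J) (f i)) (ENNReal.ofReal p) volume ≤ ENNReal.ofReal (τ / 2) := by
    refine (eLpNorm_interp hp _ hη.le (A := M.K * B) (by positivity) hiu ?_).trans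
      (ENNReal.ofReal_le_ofReal hη2)
    refine (M.low_eLpNorm_two (BB_meas J) (BB_vol J) hK.le (fun ξ _ => M.bound ξ) (f i)).trans ?_
    apply ENNReal.ofReal_le_ofReal
    gcongr
    exact hB i
  refine (add_le_add h1 h2).trans ?_
  rw [← ENNReal.ofReal_add (by positivity) (by positivity)]
  apply ENNReal.ofReal_le_ofReal; linarith

end Mlt

lemma refl_coord {d : ℕ} (a z : Rd d) (i : Fin d) (h : a i = 0) :
    ((ℝ ∙ a)ᗮ.reflection z) i = z i := by
  rw [Submodule.reflection_orthogonal_apply, Submodule.reflection_singleton_apply]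
  simp [h]

lemma refl_fix {d : ℕ} (a z : Rd d) (h : inner ℝ a z = 0) :
    (ℝ ∙ a)ᗮ.reflection z = z :=
  Submodule.reflection_mem_subspace_eq_self (Submodule.mem_orthogonal_singleton_iff_inner_right.2 h)

lemma blockSq_of_fst {d k : ℕ} {z w : Rd d} (h : ∀ i : Fin d, (i : ℕ) < d - k → z i = w i) :
    blockSq d k z = blockSq d k w := by
  unfold blockSq
  refine Finset.sum_congr rfl fun i _ => ?_
  split_ifs with hi
  · rw [h i hi]
  · rfl

lemma blockSq_of_snd {d k : ℕ} {z w : Rd d} (h : ∀ i : Fin d, ¬ (i : ℕ) < d - k → z i = w i)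
    (hn : ‖z‖ = ‖w‖) : blockSq d k z = blockSq d k w := by
  have key : ∀ v : Rd d, blockSq d k v = ‖v‖ ^ 2 - ∑ i : Fin d, if (i : ℕ) < d - k then 0 else v i ^ 2 := by
    intro v
    rw [norm_sq_Rd, ← Finset.sum_sub_distrib]
    unfold blockSq
    refine Finset.sum_congr rfl fun i _ => ?_
    split_ifs <;> simp
  rw [key, key, hn]
  congr 1
  refine Finset.sum_congr rfl fun i _ => ?_
  split_ifs with hi
  · rfl
  · rw [h i hi]

lemma exists_isometry {d k : ℕ} (x y : Rd d) (hb : blockSq d k x = blockSq d k y)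
    (hn : ‖x‖ = ‖y‖) : ∃ A : Rd d ≃ₗᵢ[ℝ] Rd d, A x = y ∧ ∀ z, blockSq d k (A z) = blockSq d k z := by
  let P : Rd d → Rd d := fun z => WithLp.toLp 2 (fun i => if (i : ℕ) < d - k then z i else 0)
  have hP : ∀ z i, P z i = if (i : ℕ) < d - k then z i else 0 := fun z i => rfl
  have hPn : ∀ z, ‖P z‖ ^ 2 = blockSq d k z := by
    intro z
    rw [norm_sq_Rd]
    unfold blockSq
    refine Finset.sum_congr rfl fun i _ => ?_
    rw [hP]; split_ifs <;> simp
  have hort : ∀ z w, inner ℝ (P z) (w - P w) = 0 := by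
    intro z w
    rw [PiLp.inner_apply]
    refine Finset.sum_eq_zero fun i _ => ?_
    rw [PiLp.sub_apply, hP, hP]
    split_ifs <;> simp
  have hort' : ∀ z w, inner ℝ (w - P w) (P z) = 0 := fun z w => by
    rw [real_inner_comm]; exact hort z w
  have hQn : ∀ z, ‖z - P z‖ ^ 2 = ‖z‖ ^ 2 - blockSq d k z := by
    intro z
    have h1 : ‖P z + (z - P z)‖ ^ 2 = ‖P z‖ ^ 2 + ‖z - P z‖ ^ 2 := by
      have := norm_add_sq_eq_norm_sq_add_norm_sq_of_inner_eq_zero (P z) (z - P z) (hort z z)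
      simpa [sq] using this
    rw [add_sub_cancel, hPn] at h1
    linarith
  have e1 : ‖P x‖ = ‖P y‖ := by
    rw [← sq_eq_sq₀ (norm_nonneg _) (norm_nonneg _), hPn, hPn, hb]
  have e2 : ‖x - P x‖ = ‖y - P y‖ := by
    rw [← sq_eq_sq₀ (norm_nonneg _) (norm_nonneg _), hQn, hQn, hb, hn]
  set a := P x - P y with ha
  set b := (x - P x) - (y - P y) with hb'
  refine ⟨((ℝ ∙ b)ᗮ.reflection).trans ((ℝ ∙ a)ᗮ.reflection), ?_, fun z => ?_⟩
  · rw [LinearIsometryEquiv.trans_apply]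
    have s1 : (ℝ ∙ b)ᗮ.reflection x = P x + (y - P y) := by
      conv_lhs => rw [← add_sub_cancel (P x) x]
      rw [map_add, refl_fix b (P x) (by rw [hb', inner_sub_left, hort', hort', sub_zero]),
        hb', Submodule.reflection_sub e2]
    rw [s1, map_add, ha, Submodule.reflection_sub e1, refl_fix, add_sub_cancel]
    rw [inner_sub_left, hort, hort, sub_zero]
  · rw [LinearIsometryEquiv.trans_apply]
    rw [blockSq_of_snd (w := (ℝ ∙ b)ᗮ.reflection z), blockSq_of_fst]
    · intro i hi
      apply refl_coord
      simp [hb', hP, hi]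
    · intro i hi
      apply refl_coord
      simp [ha, hP, hi]
    · simp

lemma fInv_congr_ae {d : ℕ} {f g : Rd d → ℂ} (h : f =ᵐ[volume] g) (x : Rd d) :
    𝓕⁻ f x = 𝓕⁻ g x := by
  rw [Real.fourierInv_eq, Real.fourierInv_eq]
  refine integral_congr_ae ?_
  filter_upwards [h] with v hv
  rw [hv]

namespace Mlt
variable {d : ℕ} (M : Mlt d)

lemma sym_of_comp {k : ℕ} (f : HH d) (h : ∀ A : Rd d ≃ₗᵢ[ℝ] Rd d,
    (∀ z, blockSq d k (A z) = blockSq d k z) → (fun ξ => f (A ξ)) =ᵐ[volume] f) : M.Sym k f := by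
  intro j x y hb hn
  obtain ⟨A, hA, hA'⟩ := exists_isometry x y hb hn
  rw [← hA]
  unfold low
  rw [← Real.fourierInv_comp_linearIsometry]
  refine (fInv_congr_ae ?_ x).symm
  filter_upwards [h A hA'] with ξ hξ
  have e : A ξ ∈ BB d j ↔ ξ ∈ BB d j := by simp [BB]
  simp only [Function.comp, mf]
  by_cases hh : ξ ∈ BB d j
  · rw [Set.indicator_of_mem hh, Set.indicator_of_mem (e.2 hh), hξ, M.rad (A ξ) ξ (by simp)]
  · rw [Set.indicator_of_notMem hh, Set.indicator_of_notMem (fun h' => hh (e.1 h'))]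

lemma sym_rep {k : ℕ} (f : HH d) (h : M.Sym k f) :
    ∃ v : Rd d → ℂ, GkSymmetric d k v ∧ v =ᵐ[volume] M.T f := by
  obtain ⟨ns, -, hns⟩ := M.low_exists_ae f
  refine ⟨fun x => limUnder atTop (fun i => M.low (BB d (ns i)) f x), ?_, ?_⟩
  · intro x y hb hn
    have : (fun i => M.low (BB d (ns i)) f x) = fun i => M.low (BB d (ns i)) f y :=
      funext fun i => h _ x y hb hn
    simp only [this]
  · filter_upwards [hns] with x hx
    exact hx.limUnder_eq

lemma Sym.sub {k : ℕ} {f g : HH d} (hf : M.Sym k f) (hg : M.Sym k g) : M.Sym k (f - g) := by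
  intro j x y hb hn
  rw [M.low_sub (BB_meas j) (BB_vol j), M.low_sub (BB_meas j) (BB_vol j), hf j x y hb hn,
    hg j x y hb hn]

lemma Sym.smul {k : ℕ} {f : HH d} (hf : M.Sym k f) (a : ℂ) : M.Sym k (a • f) := by
  intro j x y hb hn
  rw [low_inner, low_inner, inner_smul_right, inner_smul_right, ← low_inner, ← low_inner,
    hf j x y hb hn]

lemma Sym.weak {k : ℕ} {ι : Type*} {l : Filter ι} [l.NeBot] {F : ι → HH d} {f : HH d}
    (hF : ∀ i, M.Sym k (F i)) (h : ∀ g : HH d, Tendsto (fun i => inner ℂ g (F i)) l (𝓝 (inner ℂ g f))) :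
    M.Sym k f := by
  intro j x y hb hn
  have h1 := h (M.kk j x)
  have h2 := h (M.kk j y)
  simp_rw [← low_inner] at h1 h2
  refine tendsto_nhds_unique h1 (h2.congr fun i => ?_)
  exact (hF i j x y hb hn).symm

lemma T_zero : M.T (0 : HH d) = 0 := by
  have := M.T_sub 0 0
  simpa using this

lemma T_smul (a : ℂ) (f : HH d) : M.T (a • f) = a • M.T f := by
  unfold T
  have : (M.mf_memLp MeasurableSet.univ (a • f)).toLp =
      a • (M.mf_memLp MeasurableSet.univ f).toLp := by
    rw [← MemLp.toLp_const_smul]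
    refine MemLp.toLp_congr _ _ ?_
    filter_upwards [Lp.coeFn_smul a f] with ξ hξ
    simp only [mf, Set.indicator_univ, hξ, Pi.smul_apply, smul_eq_mul]
    ring
  rw [this]
  exact FourierTransform.fourierInv_smul _ _

lemma T_inj {f : HH d} (h : M.T f = 0) : f = 0 := by
  unfold T at h
  have h1 : ‖(M.mf_memLp MeasurableSet.univ f).toLp‖ = 0 := by
    rw [← norm_fourierInv_L2, h, norm_zero]
  rw [norm_eq_zero] at h1
  have h2 := MemLp.coeFn_toLp (M.mf_memLp MeasurableSet.univ f)
  rw [h1] at h2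
  rw [Lp.eq_zero_iff_ae_eq_zero]
  filter_upwards [h2, Lp.coeFn_zero ℂ 2 (volume : Measure (Rd d))] with ξ h3 h4
  rw [h4] at h3
  simp only [mf, Set.indicator_univ, Pi.zero_apply] at h3
  have := M.pos ξ
  rcases mul_eq_zero.1 h3.symm with h5 | h5
  · norm_cast at h5; linarith
  · exact h5

lemma exists_sym (k : ℕ) : ∃ f : HH d, M.Sym k f ∧ f ≠ 0 := by
  have hm : MemLp ((BB d 0).indicator fun _ => (1 : ℂ)) 2 (volume : Measure (Rd d)) :=
    memLp_indicator_const _ (BB_meas 0) _ (Or.inr (BB_vol 0))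
  refine ⟨hm.toLp, ?_, ?_⟩
  · apply sym_of_comp
    intro A _
    have h1 := hm.coeFn_toLp
    have h2 := (A.measurePreserving.quasiMeasurePreserving).ae_eq_comp h1
    filter_upwards [h1, h2] with ξ h3 h4
    have e : A ξ ∈ BB d 0 ↔ ξ ∈ BB d 0 := by simp [BB]
    simp only [Function.comp] at h4
    rw [h3, h4]
    by_cases hh : ξ ∈ BB d 0
    · rw [Set.indicator_of_mem hh, Set.indicator_of_mem (e.2 hh)]
    · rw [Set.indicator_of_notMem hh, Set.indicator_of_notMem (fun h' => hh (e.1 h'))]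
  · intro h
    have h1 := hm.coeFn_toLp
    rw [h] at h1
    have h2 : volume (BB d 0) = 0 := by
      refine measure_mono_null ?_ (ae_iff.1 (h1.symm.trans (Lp.coeFn_zero ℂ 2 (volume : Measure (Rd d)))))
      intro ξ hξ
      simp [hξ]
    exact (Metric.measure_ball_pos volume (0 : Rd d) (r := 2 ^ 0) (by norm_num)).ne' h2

end Mlt

lemma weak_lim {d : ℕ} (F : ℕ → HH d) (hF : ∀ n, ‖F n‖ ≤ 1) : ∃ f : HH d, ‖f‖ ≤ 1 ∧
    ∀ g : HH d, Tendsto (fun n => inner ℂ g (F n)) (hyperfilter ℕ : Filter ℕ) (𝓝 (inner ℂ g f)) := by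
  have hc := WeakDual.isCompact_closedBall (𝕜 := ℂ) (0 : StrongDual ℂ (HH d)) 1
  let φ : ℕ → WeakDual ℂ (HH d) := fun n =>
    StrongDual.toWeakDual (InnerProductSpace.toDual ℂ (HH d) (F n))
  obtain ⟨a, ha, hle⟩ := isCompact_iff_ultrafilter_le_nhds.1 hc ((hyperfilter ℕ).map φ) (by
    rw [Filter.le_principal_iff, Ultrafilter.mem_coe, Ultrafilter.mem_map]
    refine Filter.univ_mem' fun n => ?_
    simp only [φ, Set.mem_preimage, Metric.mem_closedBall, dist_zero_right]
    exact le_of_eq_of_le (LinearIsometryEquiv.norm_map (InnerProductSpace.toDual ℂ (HH d)) _) (hF n))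
  have ht : Tendsto φ (hyperfilter ℕ : Filter ℕ) (𝓝 a) := hle
  refine ⟨(InnerProductSpace.toDual ℂ (HH d)).symm (WeakDual.toStrongDual a), ?_, fun g => ?_⟩
  · rw [LinearIsometryEquiv.norm_map]
    simpa using ha
  · have h1 := ((WeakDual.eval_continuous g).tendsto a).comp ht
    have h2 := (Complex.continuous_conj.tendsto _).comp h1
    have e1 : inner ℂ g ((InnerProductSpace.toDual ℂ (HH d)).symm (WeakDual.toStrongDual a)) =
        (starRingEnd ℂ) (a g) := by
      rw [← inner_conj_symm, InnerProductSpace.toDual_symm_apply]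
      rfl
    rw [e1]
    refine h2.congr fun n => ?_
    simp only [Function.comp, φ]
    rw [← inner_conj_symm]
    rfl

namespace Mlt
variable {d : ℕ} (M : Mlt d)

/-- the Lp norm of the image -/
def NN (p : ℝ) (f : HH d) : ℝ := (eLpNorm (M.T f) (ENNReal.ofReal p) volume).toReal

lemma T_fin {p : ℝ} (hp : 2 < p) (hr1 : M.rr p < 1) (f : HH d) :
    MemLp (M.T f) (ENNReal.ofReal p) volume := by
  obtain ⟨A, -, hA⟩ := M.T_bound hp hr1
  exact ⟨Lp.aestronglyMeasurable _, (hA f).trans_lt ENNReal.ofReal_lt_top⟩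

lemma NN_pos {p : ℝ} (hp : 2 < p) (hr1 : M.rr p < 1) {f : HH d} (hf : f ≠ 0) : 0 < M.NN p f := by
  refine ENNReal.toReal_pos (fun h => hf ?_) (M.T_fin hp hr1 f).2.ne
  rw [eLpNorm_eq_zero_iff (Lp.aestronglyMeasurable _) (by simp; linarith)] at h
  exact M.T_inj ((Lp.eq_zero_iff_ae_eq_zero).2 h)

lemma NN_smul (p : ℝ) (a : ℂ) (f : HH d) : M.NN p (a • f) = ‖a‖ * M.NN p f := by
  unfold NN
  rw [T_smul, eLpNorm_congr_ae (Lp.coeFn_smul a (M.T f)), eLpNorm_const_smul,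
    ENNReal.toReal_mul]
  simp

lemma NN_tri {p : ℝ} (hp : 2 < p) (hr1 : M.rr p < 1) (f g : HH d) :
    M.NN p f ≤ M.NN p g + M.NN p (f - g) := by
  unfold NN
  rw [← ENNReal.toReal_add (M.T_fin hp hr1 g).2.ne (M.T_fin hp hr1 _).2.ne]
  refine ENNReal.toReal_mono (ENNReal.add_ne_top.2 ⟨(M.T_fin hp hr1 g).2.ne, (M.T_fin hp hr1 _).2.ne⟩) ?_
  have : (M.T f : Rd d → ℂ) =ᵐ[volume] (M.T g : Rd d → ℂ) + (M.T (f - g) : Rd d → ℂ) := by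
    rw [T_sub]
    filter_upwards [Lp.coeFn_sub (M.T f) (M.T g)] with x hx
    rw [Pi.add_apply, hx, Pi.sub_apply]; ring
  rw [eLpNorm_congr_ae this]
  exact eLpNorm_add_le (Lp.aestronglyMeasurable _) (Lp.aestronglyMeasurable _)
    (by rw [ENNReal.one_le_ofReal]; linarith)

theorem exists_max {p : ℝ} (hp : 2 < p) (hr1 : M.rr p < 1) {k : ℕ} (hk : Good d k) :
    ∃ f : HH d, M.Sym k f ∧ f ≠ 0 ∧ ∀ g : HH d, M.Sym k g → M.NN p g * ‖f‖ ≤ M.NN p f * ‖g‖ := by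
  let S : Set ℝ := {t | ∃ g : HH d, M.Sym k g ∧ ‖g‖ ≤ 1 ∧ t = M.NN p g}
  obtain ⟨g0, hg0, hg0'⟩ := M.exists_sym k
  have hmem : ∀ g : HH d, M.Sym k g → g ≠ 0 → M.NN p g / ‖g‖ ∈ S := by
    intro g hg hg'
    refine ⟨((‖g‖⁻¹ : ℝ) : ℂ) • g, hg.smul M _, ?_, ?_⟩
    · rw [norm_smul, Complex.norm_real, norm_inv, norm_norm, inv_mul_cancel₀ (norm_ne_zero_iff.2 hg')]
    · rw [NN_smul, Complex.norm_real, norm_inv, norm_norm]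
      field_simp
  obtain ⟨A, hA0, hA⟩ := M.T_bound hp hr1
  have hbdd : BddAbove S := by
    refine ⟨A, ?_⟩
    rintro t ⟨g, -, hg, rfl⟩
    refine ENNReal.toReal_le_of_le_ofReal hA0 ((hA g).trans (ENNReal.ofReal_le_ofReal ?_))
    nlinarith
  obtain ⟨u, -, hu, huS⟩ := exists_seq_tendsto_sSup ⟨_, hmem g0 hg0 hg0'⟩ hbdd
  choose F hFs hFn hFu using huS
  obtain ⟨f, hfn, hf⟩ := weak_lim F hFn
  have hfs : M.Sym k f := Sym.weak M hFs hf
  have hle : sSup S ≤ M.NN p f := by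
    refine le_of_forall_pos_le_add fun τ hτ => ?_
    have hc := M.compact (l := (hyperfilter ℕ : Filter ℕ)) (f := fun n => F n - f) (B := 2) hp hr1 hk
      (fun n => (hFs n).sub M hfs) (fun n => (norm_sub_le _ _).trans (by linarith [hFn n]))
      (by norm_num) (fun h => by
        simp_rw [inner_sub_right]
        simpa using (hf h).sub_const (inner ℂ h f)) hτ
    refine le_of_tendsto (hu.mono_left Nat.hyperfilter_le_atTop) ?_
    filter_upwards [hc] with n hn
    rw [hFu n]
    refine (M.NN_tri hp hr1 (F n) f).trans ?_
    gcongr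
    exact ENNReal.toReal_le_of_le_ofReal hτ.le hn
  have hpos : 0 < M.NN p f := by
    refine lt_of_lt_of_le ?_ hle
    refine lt_of_lt_of_le ?_ (le_csSup hbdd (hmem g0 hg0 hg0'))
    exact div_pos (M.NN_pos hp hr1 hg0') (norm_pos_iff.2 hg0')
  refine ⟨f, hfs, ?_, fun g hg => ?_⟩
  · rintro rfl
    simp only [NN, T_zero] at hpos
    rw [eLpNorm_congr_ae (Lp.coeFn_zero ℂ 2 (volume : Measure (Rd d)))] at hpos
    simp at hpos
  · by_cases hg0 : g = 0
    · subst hg0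
      simp only [NN, T_zero]
      rw [eLpNorm_congr_ae (Lp.coeFn_zero ℂ 2 (volume : Measure (Rd d)))]
      simp
    · have h1 := (le_csSup hbdd (hmem g hg hg0)).trans hle
      rw [div_le_iff₀ (norm_pos_iff.2 hg0)] at h1
      refine le_trans ?_ h1
      exact mul_le_of_le_one_right ENNReal.toReal_nonneg hfn

end Mlt

/-- the multiplier associated with a symbol -/
def mkM {d : ℕ} {s : ℝ} (G : ℝ → ℝ) (hG : Measurable G) (hpos : ∀ r, 0 < G r) {a : ℝ} (ha : 0 < a)
    (hs : 0 < s) (hlow : ∀ r, 0 ≤ r → a * (1 + r ^ 2) ^ s ≤ G r) : Mlt d where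
  m ξ := (√(G ‖ξ‖))⁻¹
  K := (√a)⁻¹
  q := 2 ^ (-s)
  meas := (hG.comp measurable_norm).sqrt.inv
  pos ξ := inv_pos.2 (Real.sqrt_pos.2 (hpos _))
  bound ξ := by
    refine inv_anti₀ (Real.sqrt_pos.2 ha) (Real.sqrt_le_sqrt ?_)
    refine le_trans ?_ (hlow ‖ξ‖ (norm_nonneg _))
    refine le_mul_of_one_le_right ha.le (Real.one_le_rpow ?_ hs.le)
    nlinarith [sq_nonneg ‖ξ‖]
  q_pos := by positivity
  q_lt := Real.rpow_lt_one_of_one_lt_of_neg (by norm_num) (by linarith)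
  dec j ξ h := by
    have e : ((√a)⁻¹ * ((2 : ℝ) ^ (-s)) ^ j) = (√(a * ((2 ^ j) ^ 2) ^ s))⁻¹ := by
      have h1 : (((2 : ℝ) ^ j) ^ 2) ^ s = (((2 : ℝ) ^ s) ^ j) ^ 2 := by
        rw [← pow_mul, ← pow_mul, ← Real.rpow_natCast, ← Real.rpow_natCast, ← Real.rpow_mul (by norm_num),
          ← Real.rpow_mul (by norm_num), mul_comm]
      rw [h1, Real.sqrt_mul ha.le, Real.sqrt_sq (by positivity), mul_inv, Real.rpow_neg (by norm_num),
        inv_pow]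
    rw [e]
    refine inv_anti₀ (Real.sqrt_pos.2 (by positivity)) (Real.sqrt_le_sqrt ?_)
    refine le_trans ?_ (hlow ‖ξ‖ (norm_nonneg _))
    gcongr
    have : ((2 : ℝ) ^ j) ^ 2 ≤ ‖ξ‖ ^ 2 := by gcongr
    linarith
  rad ξ η h := by rw [h]

lemma normsq_HH {d : ℕ} (f : HH d) : ‖f‖ ^ 2 = ∫ ξ, ‖f ξ‖ ^ 2 := by
  have h := L2.inner_def (𝕜 := ℂ) f f
  rw [inner_self_eq_norm_sq_to_K] at h
  have h2 : ((∫ ξ, ‖f ξ‖ ^ 2 : ℝ) : ℂ) = ∫ ξ, inner ℂ (f ξ) (f ξ) := by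
    rw [← integral_complex_ofReal]
    refine integral_congr_ae (ae_of_all _ fun ξ => ?_)
    simp only [inner_self_eq_norm_sq_to_K]
    norm_cast
  rw [← h2] at h
  refine Complex.ofReal_injective (Eq.trans ?_ h)
  simp

section core
variable {d : ℕ} {s : ℝ} (G : ℝ → ℝ) (hG : Measurable G) (hpos : ∀ r, 0 < G r) {a b : ℝ} (ha : 0 < a)
    (hs : 0 < s) (hlow : ∀ r, 0 ≤ r → a * (1 + r ^ 2) ^ s ≤ G r)

lemma mf_normsq (f : HH d) (ξ : Rd d) :
    ‖(mkM (d := d) G hG hpos ha hs hlow).mf Set.univ f ξ‖ ^ 2 * G ‖ξ‖ = ‖f ξ‖ ^ 2 := by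
  simp only [Mlt.mf, Set.indicator_univ, mkM]
  rw [norm_mul, Complex.norm_real, mul_pow, norm_inv, inv_pow, Real.norm_of_nonneg (Real.sqrt_nonneg _),
    Real.sq_sqrt (hpos _).le]
  have := (hpos ‖ξ‖).ne'
  field_simp

lemma toHs {k : ℕ} (f : HH d) (hf : (mkM (d := d) G hG hpos ha hs hlow).Sym k f) :
    ∃ u : HsFn d s, GkSymmetric d k u.toFun ∧
      u.toFun =ᵐ[volume] (mkM (d := d) G hG hpos ha hs hlow).T f ∧ qeps G u = ‖f‖ ^ 2 := by
  set M := mkM (d := d) G hG hpos ha hs hlow with hM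
  obtain ⟨v, hv, hvT⟩ := M.sym_rep f hf
  have hmf := M.mf_memLp MeasurableSet.univ f
  have hfint : Integrable (fun ξ => ‖f ξ‖ ^ 2) volume :=
    (memLp_two_iff_integrable_sq_norm (Lp.aestronglyMeasurable f)).1 (Lp.memLp f)
  refine ⟨⟨v, M.mf Set.univ f, (memLp_congr_ae hvT).2 (Lp.memLp _), hmf, isFT_of_toLp hmf hvT, ?_⟩,
    hv, hvT, ?_⟩
  · refine Integrable.mono' (hfint.const_mul a⁻¹) ?_ (ae_of_all _ fun ξ => ?_)
    · refine (hmf.1.norm.pow 2).mul (Measurable.aestronglyMeasurable ?_)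
      exact (measurable_const.add (measurable_norm.pow_const 2)).pow_const s
    · rw [Real.norm_of_nonneg (by positivity), ← mf_normsq G hG hpos ha hs hlow f ξ, ← hM]
      have h1 := hlow ‖ξ‖ (norm_nonneg _)
      have h2 : (1 + ‖ξ‖ ^ 2) ^ s ≤ a⁻¹ * G ‖ξ‖ := by
        rw [inv_mul_eq_div, le_div_iff₀ ha]; linarith
      calc _ ≤ ‖M.mf Set.univ f ξ‖ ^ 2 * (a⁻¹ * G ‖ξ‖) := by gcongr
        _ = _ := by ring
  · rw [normsq_HH]
    unfold qeps
    exact integral_congr_ae (ae_of_all _ fun ξ => mf_normsq G hG hpos ha hs hlow f ξ)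

lemma ofHs (hup : ∀ r, 0 ≤ r → G r ≤ b * (1 + r ^ 2) ^ s) {k : ℕ} (u : HsFn d s)
    (hu : GkSymmetric d k u.toFun) :
    ∃ f : HH d, (mkM (d := d) G hG hpos ha hs hlow).Sym k f ∧
      u.toFun =ᵐ[volume] (mkM (d := d) G hG hpos ha hs hlow).T f ∧ qeps G u = ‖f‖ ^ 2 := by
  set M := mkM (d := d) G hG hpos ha hs hlow with hM
  have hsq : Measurable fun ξ : Rd d => ((√(G ‖ξ‖) : ℝ) : ℂ) :=
    Complex.measurable_ofReal.comp (hG.comp measurable_norm).sqrt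
  have hn : ∀ ξ : Rd d, ‖((√(G ‖ξ‖) : ℝ) : ℂ) * u.ft ξ‖ ^ 2 = ‖u.ft ξ‖ ^ 2 * G ‖ξ‖ := by
    intro ξ
    rw [norm_mul, mul_pow, Complex.norm_real, Real.norm_of_nonneg (Real.sqrt_nonneg _),
      Real.sq_sqrt (hpos _).le, mul_comm]
  have haes : AEStronglyMeasurable (fun ξ : Rd d => ((√(G ‖ξ‖) : ℝ) : ℂ) * u.ft ξ) volume :=
    hsq.aestronglyMeasurable.mul u.ft_memL2.1
  have hmem : MemLp (fun ξ : Rd d => ((√(G ‖ξ‖) : ℝ) : ℂ) * u.ft ξ) 2 volume := by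
    rw [memLp_two_iff_integrable_sq_norm haes]
    refine Integrable.mono' (u.memHs.const_mul b) (haes.norm.pow 2) (ae_of_all _ fun ξ => ?_)
    rw [Real.norm_of_nonneg (by positivity), hn]
    calc _ ≤ ‖u.ft ξ‖ ^ 2 * (b * (1 + ‖ξ‖ ^ 2) ^ s) := by
          gcongr; exact hup _ (norm_nonneg _)
      _ = _ := by ring
  have hco := hmem.coeFn_toLp
  have hft : M.mf Set.univ hmem.toLp =ᵐ[volume] u.ft := by
    filter_upwards [hco] with ξ hξ
    simp only [Mlt.mf, Set.indicator_univ, hξ, hM, mkM]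
    have : ((√(G ‖ξ‖) : ℝ) : ℂ) ≠ 0 := by
      exact_mod_cast (Real.sqrt_pos.2 (hpos ‖ξ‖)).ne'
    push_cast
    rw [← mul_assoc, inv_mul_cancel₀ this, one_mul]
  refine ⟨hmem.toLp, ?_, ?_, ?_⟩
  · apply M.sym_of_comp
    intro A hA
    have h1 := u.isFT.comp_isometry u.ft_memL2 A (fun x => hu _ _ (hA x) (by simp))
    have h2 := (A.measurePreserving.quasiMeasurePreserving).ae_eq_comp hco
    filter_upwards [h1, h2, hco] with ξ e1 e2 e3
    simp only [Function.comp] at e2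
    rw [e2, e3, e1, LinearIsometryEquiv.norm_map]
  · have e : M.T hmem.toLp = u.memL2.toLp := by
      unfold Mlt.T
      rw [MemLp.toLp_congr _ u.ft_memL2 hft, ← isFT_toLp u.ft_memL2 u.memL2 u.isFT]
      simp
    rw [e]
    exact u.memL2.coeFn_toLp.symm
  · rw [normsq_HH]
    unfold qeps
    refine integral_congr_ae ?_
    filter_upwards [hco] with ξ hξ
    rw [hξ, hn]

end core

theorem attained_core {d : ℕ} {s : ℝ} (G : ℝ → ℝ) (hG : Measurable G) (hpos : ∀ r, 0 < G r)
    {a b : ℝ} (ha : 0 < a) (hs : 0 < s) (hlow : ∀ r, 0 ≤ r → a * (1 + r ^ 2) ^ s ≤ G r)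
    (hup : ∀ r, 0 ≤ r → G r ≤ b * (1 + r ^ 2) ^ s) {p : ℝ} (hp : 2 < p)
    (hsp : (d : ℝ) * (1 / 2 - 1 / p) < s) {k : ℕ} (hk : Good d k) :
    Attained d s p G (GkSymmetric d k) := by
  set M := mkM (d := d) G hG hpos ha hs hlow with hM
  have hr1 : M.rr p < 1 := by
    have : M.rr p = (2 : ℝ) ^ (-s + d * (1 / 2 - 1 / p)) := by
      rw [Real.rpow_add (by norm_num), Real.rpow_mul (by norm_num), Real.rpow_natCast]
      rfl
    rw [this]
    exact Real.rpow_lt_one_of_one_lt_of_neg (by norm_num) (by linarith)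
  obtain ⟨f, hfs, hf0, hfm⟩ := M.exists_max hp hr1 hk
  obtain ⟨u, hu, huT, huq⟩ := toHs G hG hpos ha hs hlow f hfs
  have hN : ∀ (w : HsFn d s) (h : HH d), w.toFun =ᵐ[volume] M.T h → LpN p w.toFun = M.NN p h := by
    intro w h hw
    unfold LpN Mlt.NN
    rw [eLpNorm_congr_ae hw]
  have hu0 : ¬ u.toFun =ᵐ[volume] (fun _ => (0 : ℂ)) := by
    intro h
    exact hf0 (M.T_inj ((Lp.eq_zero_iff_ae_eq_zero).2 (huT.symm.trans h)))
  have hup' : MemLp u.toFun (ENNReal.ofReal p) volume := (memLp_congr_ae huT).2 (M.T_fin hp hr1 f)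
  refine ⟨u, hu, hu0, hup', ?_⟩
  unfold Rayleigh
  symm
  apply IsLeast.csInf_eq
  refine ⟨⟨u, hu, hu0, hup', rfl⟩, ?_⟩
  rintro t ⟨w, hw, hw0, -, rfl⟩
  obtain ⟨h, hhs, hhT, hhq⟩ := ofHs G hG hpos ha hs hlow hup w hw
  have hh0 : h ≠ 0 := by
    rintro rfl
    rw [M.T_zero] at hhT
    exact hw0 (hhT.trans (Lp.coeFn_zero ℂ 2 (volume : Measure (Rd d))))
  rw [huq, hhq, hN u f huT, hN w h hhT, ← div_pow, ← div_pow]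
  have p1 := M.NN_pos hp hr1 hf0
  have p2 := M.NN_pos hp hr1 hh0
  gcongr ?_ ^ 2
  rw [div_le_div_iff₀ p1 p2]
  linarith [hfm h hhs]

lemma adm_bounds {s γ c C ε : ℝ} (hs : 0 < s) (hγ : 1 < γ) (hc : 0 < c) (hcC : c ≤ C)
    {g : ℝ → ℝ → ℝ} (hg : IsAdmissible s γ c C g) (hε : ε ∈ Set.Ioo (0:ℝ) 1) (r : ℝ) (hr : 0 ≤ r) :
    (c * ε * 4 ^ (-s)) * (1 + r ^ 2) ^ s ≤ g ε r ∧ g ε r ≤ (2 * C) * (1 + r ^ 2) ^ s := by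
  obtain ⟨-, -, hfar, hnear⟩ := hg
  obtain ⟨h0, h1⟩ := hε
  have hC : 0 < C := by linarith
  have hone : (1 : ℝ) ≤ (1 + r ^ 2) ^ s := Real.one_le_rpow (by nlinarith) hs.le
  have h4 : (4 : ℝ) ^ (-s) * 4 ^ s = 1 := by
    rw [← Real.rpow_add (by norm_num)]; simp
  have h4p : (0 : ℝ) < 4 ^ (-s) := by positivity
  rcases le_total (1 / 2) |r - 1| with h | h
  · obtain ⟨hl, hu⟩ := hfar ε ⟨h0, h1⟩ r h
    rw [abs_of_nonneg hr] at hl hu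
    have e : r ^ (2 * s) = (r ^ 2) ^ s := by
      rw [Real.rpow_mul hr]; norm_cast
    rw [e] at hl hu
    have hrs : 0 ≤ (r ^ 2) ^ s := by positivity
    have hle : (r ^ 2) ^ s ≤ (1 + r ^ 2) ^ s := by gcongr; linarith
    constructor
    · refine le_trans ?_ hl
      have h5 : (1 + r ^ 2) ^ s ≤ 4 ^ s * (1 + (r ^ 2) ^ s) := by
        rcases le_total (r ^ 2) 1 with h6 | h6
        · calc (1 + r ^ 2) ^ s ≤ 4 ^ s := by gcongr; linarith
            _ ≤ _ := le_mul_of_one_le_right (by positivity) (by linarith)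
        · calc (1 + r ^ 2) ^ s ≤ (4 * r ^ 2) ^ s := by gcongr; linarith
            _ = 4 ^ s * (r ^ 2) ^ s := Real.mul_rpow (by norm_num) (by positivity)
            _ ≤ _ := by gcongr; linarith
      calc c * ε * 4 ^ (-s) * (1 + r ^ 2) ^ s ≤ c * ε * 4 ^ (-s) * (4 ^ s * (1 + (r ^ 2) ^ s)) := by
            gcongr
        _ = c * ε * (4 ^ (-s) * 4 ^ s) * (1 + (r ^ 2) ^ s) := by ring
        _ = c * ε * (1 + (r ^ 2) ^ s) := by rw [h4, mul_one]
        _ ≤ c * (1 + (r ^ 2) ^ s) := by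
            gcongr
            nlinarith
    · refine hu.trans ?_
      nlinarith
  · obtain ⟨hl, hu⟩ := hnear ε ⟨h0, h1⟩ r h
    have hγ0 : 0 ≤ |r - 1| ^ γ := by positivity
    have hγ1 : |r - 1| ^ γ ≤ 1 := Real.rpow_le_one (abs_nonneg _) (by linarith) (by linarith)
    constructor
    · refine le_trans ?_ hl
      have h5 : (1 + r ^ 2) ^ s ≤ 4 ^ s := by
        gcongr
        have := (abs_le.1 h).2
        nlinarith
      calc c * ε * 4 ^ (-s) * (1 + r ^ 2) ^ s ≤ c * ε * 4 ^ (-s) * 4 ^ s := by gcongr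
        _ = c * ε * (4 ^ (-s) * 4 ^ s) := by ring
        _ = c * ε := by rw [h4, mul_one]
        _ ≤ _ := by gcongr; linarith
    · refine hu.trans ?_
      nlinarith

/-- Proposition A.1: existence of minimizers for `R^k_ε(p)`,
`k ∈ {2,…,d-2}`, and for `R^rad_ε(p)`, for any fixed `ε ∈ (0,1)`. -/
theorem stmt12 (d : ℕ) (hd : 2 ≤ d)
    (s γ p c C : ℝ)
    (hs : (d : ℝ) / ((d : ℝ) + 1) < s) (hγ : 1 < γ)
    (hp : 2 < p) (hps : s < (d : ℝ) / 2 → p < 2 * (d : ℝ) / ((d : ℝ) - 2 * s))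
    (hc : 0 < c) (hcC : c ≤ C)
    (g : ℝ → ℝ → ℝ) (hg : IsAdmissible s γ c C g)
    (ε : ℝ) (hε : ε ∈ Set.Ioo (0:ℝ) 1) :
    (∀ k : ℕ, 2 ≤ k → k ≤ d - 2 → Attained d s p (g ε) (GkSymmetric d k)) ∧
    Attained d s p (g ε) Radial := by
  have hd' : (2 : ℝ) ≤ d := by exact_mod_cast hd
  have hs0 : 0 < s := lt_trans (by positivity) hs
  have hsp : (d : ℝ) * (1 / 2 - 1 / p) < s := by
    have hpp : 0 < 1 / p := by positivity
    rcases lt_or_ge s ((d : ℝ) / 2) with h | h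
    · have h1 := hps h
      rw [lt_div_iff₀ (by linarith)] at h1
      have h2 : (d : ℝ) * (1 / 2 - 1 / p) = (d * p - 2 * d) / (2 * p) := by
        field_simp
      rw [h2, div_lt_iff₀ (by linarith)]
      linarith
    · nlinarith
  have key : ∀ k : ℕ, Good d k → Attained d s p (g ε) (GkSymmetric d k) := fun k hk =>
    attained_core (g ε) (hg.1 ε hε) (hg.2.1 ε hε)
      (a := c * ε * 4 ^ (-s)) (b := 2 * C)
      (mul_pos (mul_pos hc hε.1) (by positivity)) hs0
      (fun r hr => (adm_bounds hs0 hγ hc hcC hg hε r hr).1)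
      (fun r hr => (adm_bounds hs0 hγ hc hcC hg hε r hr).2) hp hsp hk
  refine ⟨fun k h1 h2 => key k (Or.inl ⟨h1, by omega⟩), ?_⟩
  have e : (Radial : (Rd d → ℂ) → Prop) = GkSymmetric d d := by
    funext f
    refine propext ⟨fun h x y _ hn => h x y hn, fun h x y hn => h x y ?_ hn⟩
    rw [blockSq_self, blockSq_self]
  rw [e]
  exact key d (Or.inr ⟨rfl, hd⟩)
end
end

section
/- Let 0 < r < q < ∞ and d ≥ 1. There is a constant K = K(r,q,d) < ∞ such that for all C₁, C₂ > 0 and every measurable function u : ℝ^d → ℂ with ‖u‖_{L^r(ℝ^d)} ≤ C₁ and |u(x)| ≤ C₂(1+|x|)^{−d/q} for almost every x ∈ ℝ^d, one has ‖u‖_{L^q(ℝ^d)} ≤ K · C₂ · (1 + log₊(C₁/C₂))^{1/q}, where log₊ t := max(log t, 0). -/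
open MeasureTheory Real Filter
open scoped ENNReal FourierTransform RealInnerProductSpace Topology

noncomputable section

lemma aux_ball (d : ℕ) : ∃ M : ℝ, 0 < M ∧ ∀ N : ℕ,
    ∫⁻ x in {x : Rd d | 1 + ‖x‖ < 2 ^ N}, ENNReal.ofReal ((1 + ‖x‖) ^ (-(d : ℝ)))
      ≤ ENNReal.ofReal (N * M) := by
  have hfin : volume (Metric.ball (0 : Rd d) 1) ≠ ∞ := measure_ball_lt_top.ne
  set v : ℝ := (volume (Metric.ball (0 : Rd d) 1)).toReal with hv
  have hv0 : 0 ≤ v := ENNReal.toReal_nonneg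
  refine ⟨2 ^ d * v + 1, by positivity, fun N => ?_⟩
  induction N with
  | zero =>
    have : {x : Rd d | 1 + ‖x‖ < 2 ^ 0} = ∅ := by
      ext x
      simp
    rw [this]
    simp
  | succ N ih =>
    set S : ℕ → Set (Rd d) := fun N => {x : Rd d | 1 + ‖x‖ < 2 ^ N} with hS
    have hmeas : ∀ n, MeasurableSet (S n) := fun n =>
      measurableSet_lt (by fun_prop) measurable_const
    have hsub : S (N + 1) ⊆ S N ∪ (S (N + 1) \ S N) := by
      intro x hx
      by_cases h : x ∈ S N
      · exact Or.inl h
      · exact Or.inr ⟨hx, h⟩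
    have hvol : volume (S (N + 1)) ≤ ENNReal.ofReal ((2 ^ (N + 1)) ^ d * v) := by
      have h1 : S (N + 1) ⊆ Metric.ball 0 (2 ^ (N + 1)) := by
        intro x hx
        have hx' : 1 + ‖x‖ < 2 ^ (N + 1) := hx
        rw [mem_ball_zero_iff]
        linarith
      refine (measure_mono h1).trans ?_
      rw [Measure.addHaar_ball_of_pos _ _ (by positivity), ENNReal.ofReal_mul (by positivity), hv,
        ENNReal.ofReal_toReal hfin]
      simp
    have hann : ∫⁻ x in S (N + 1) \ S N, ENNReal.ofReal ((1 + ‖x‖) ^ (-(d : ℝ)))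
        ≤ ENNReal.ofReal (2 ^ d * v + 1) := by
      calc ∫⁻ x in S (N + 1) \ S N, ENNReal.ofReal ((1 + ‖x‖) ^ (-(d : ℝ)))
          ≤ ∫⁻ x in S (N + 1) \ S N, ENNReal.ofReal (((2 ^ N) ^ d)⁻¹) := by
            refine setLIntegral_mono' ((hmeas _).diff (hmeas _)) fun x hx => ?_
            have h2 : (2 : ℝ) ^ N ≤ 1 + ‖x‖ := not_lt.1 hx.2
            apply ENNReal.ofReal_le_ofReal
            rw [Real.rpow_neg (by positivity), Real.rpow_natCast]
            gcongr
        _ = ENNReal.ofReal (((2 ^ N) ^ d)⁻¹) * volume (S (N + 1) \ S N) := by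
            rw [setLIntegral_const]
        _ ≤ ENNReal.ofReal (((2 ^ N) ^ d)⁻¹) * ENNReal.ofReal ((2 ^ (N + 1)) ^ d * v) := by
            gcongr
            exact (measure_mono Set.sdiff_subset).trans hvol
        _ ≤ _ := by
            rw [← ENNReal.ofReal_mul (by positivity)]
            apply ENNReal.ofReal_le_ofReal
            have : (((2 : ℝ) ^ N) ^ d)⁻¹ * ((2 ^ (N + 1)) ^ d * v) = 2 ^ d * v := by
              rw [pow_succ, mul_pow]
              field_simp
            linarith
    calc _ ≤ ∫⁻ x in S N ∪ (S (N + 1) \ S N), ENNReal.ofReal ((1 + ‖x‖) ^ (-(d : ℝ))) :=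
          lintegral_mono_set hsub
      _ ≤ _ := lintegral_union_le _ _ _
      _ ≤ _ := add_le_add ih hann
      _ = _ := by
          rw [← ENNReal.ofReal_add (by positivity) (by positivity)]
          congr 1
          push_cast
          ring

lemma aux_main (d : ℕ) (hd : 1 ≤ d) (r q : ℝ) (hr : 0 < r) (hrq : r < q) :
    ∃ K : ℝ, 0 < K ∧
      ∀ C₁ C₂ : ℝ, 0 < C₁ → 0 < C₂ →
        ∀ u : Rd d → ℂ, Measurable u →
          ∫⁻ x, ‖u x‖ₑ ^ r ≤ ENNReal.ofReal (C₁ ^ r) →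
          (∀ᵐ x : Rd d, ‖u x‖ ≤ C₂ * (1 + ‖x‖) ^ (-((d : ℝ) / q))) →
          ∫⁻ x, ‖u x‖ₑ ^ q
            ≤ ENNReal.ofReal (K * C₂ ^ q * (1 + max (Real.log (C₁ / C₂)) 0)) := by
  obtain ⟨M, hM, hball⟩ := aux_ball d
  have hq : 0 < q := hr.trans hrq
  have hqr : 0 < q - r := by linarith
  have hd0 : (0 : ℝ) < d := by exact_mod_cast hd
  have hl2 : 0 < Real.log 2 := Real.log_pos (by norm_num)
  set A : ℝ := r * q / (d * (q - r) * Real.log 2) with hA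
  have hA0 : 0 < A := by positivity
  refine ⟨(A + 1) * M + 1, by positivity, ?_⟩
  intro C₁ C₂ h1 h2 u hu hint hdec
  set ℓ : ℝ := max (Real.log (C₁ / C₂)) 0 with hℓ
  have hℓ0 : 0 ≤ ℓ := le_max_right _ _
  set N : ℕ := ⌈A * ℓ⌉₊ with hN
  have hN1 : A * ℓ ≤ N := Nat.le_ceil _
  have hN2 : (N : ℝ) < A * ℓ + 1 := Nat.ceil_lt_add_one (by positivity)
  set S : Set (Rd d) := {x : Rd d | 1 + ‖x‖ < 2 ^ N} with hS
  have hSm : MeasurableSet S := measurableSet_lt (by fun_prop) measurable_const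
  have hin : ∫⁻ x in S, ‖u x‖ₑ ^ q ≤ ENNReal.ofReal (C₂ ^ q * (N * M)) := by
    calc ∫⁻ x in S, ‖u x‖ₑ ^ q
        ≤ ∫⁻ x in S, ENNReal.ofReal (C₂ ^ q) * ENNReal.ofReal ((1 + ‖x‖) ^ (-(d : ℝ))) := by
          refine lintegral_mono_ae (ae_restrict_of_ae ?_)
          filter_upwards [hdec] with x hx
          rw [← ofReal_norm_eq_enorm, ENNReal.ofReal_rpow_of_nonneg (norm_nonneg _) hq.le,
            ← ENNReal.ofReal_mul (by positivity)]
          apply ENNReal.ofReal_le_ofReal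
          calc ‖u x‖ ^ q ≤ (C₂ * (1 + ‖x‖) ^ (-((d : ℝ) / q))) ^ q := by gcongr
            _ = _ := by
              rw [Real.mul_rpow h2.le (by positivity), ← Real.rpow_mul (by positivity)]
              congr 2
              field_simp
      _ = ENNReal.ofReal (C₂ ^ q) * ∫⁻ x in S, ENNReal.ofReal ((1 + ‖x‖) ^ (-(d : ℝ))) :=
          lintegral_const_mul' _ _ ENNReal.ofReal_ne_top
      _ ≤ ENNReal.ofReal (C₂ ^ q) * ENNReal.ofReal (N * M) := by
          gcongr
          exact hball N
      _ = _ := by rw [← ENNReal.ofReal_mul (by positivity)]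
  set B : ℝ := (C₂ * (2 ^ N) ^ (-((d : ℝ) / q))) ^ (q - r) with hB
  have hB0 : 0 ≤ B := by positivity
  have hBle : B * C₁ ^ r ≤ C₂ ^ q := by
    have hpos : 0 < B * C₁ ^ r := by positivity
    rw [← Real.log_le_log_iff hpos (by positivity), Real.log_mul (by positivity) (by positivity),
      hB, Real.log_rpow (by positivity), Real.log_mul (by positivity) (by positivity),
      Real.log_rpow (by positivity), Real.log_pow, Real.log_rpow h1, Real.log_rpow h2]
    have h3 : Real.log C₁ - Real.log C₂ ≤ ℓ := by
      rw [← Real.log_div h1.ne' h2.ne']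
      exact le_max_left _ _
    have h4 : r * ℓ ≤ (q - r) * (d / q * (N * Real.log 2)) := by
      calc r * ℓ = (q - r) * (d / q * ((A * ℓ) * Real.log 2)) := by
            rw [hA]
            field_simp
        _ ≤ _ := by gcongr
    have h5 := mul_le_mul_of_nonneg_left h3 hr.le
    nlinarith
  have hout : ∫⁻ x in Sᶜ, ‖u x‖ₑ ^ q ≤ ENNReal.ofReal (C₂ ^ q) := by
    calc ∫⁻ x in Sᶜ, ‖u x‖ₑ ^ q
        ≤ ∫⁻ x in Sᶜ, ENNReal.ofReal B * ‖u x‖ₑ ^ r := by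
          refine lintegral_mono_ae ?_
          filter_upwards [ae_restrict_of_ae hdec, ae_restrict_mem hSm.compl] with x hx hxS
          have h3 : (2 : ℝ) ^ N ≤ 1 + ‖x‖ := not_lt.1 hxS
          rw [← ofReal_norm_eq_enorm, ENNReal.ofReal_rpow_of_nonneg (norm_nonneg _) hq.le,
            ENNReal.ofReal_rpow_of_nonneg (norm_nonneg _) hr.le,
            ← ENNReal.ofReal_mul hB0]
          apply ENNReal.ofReal_le_ofReal
          have h4 : ‖u x‖ ^ q = ‖u x‖ ^ (q - r) * ‖u x‖ ^ r := by
            rw [← Real.rpow_add_of_nonneg (norm_nonneg _) hqr.le hr.le]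
            congr 1
            ring
          rw [h4, hB]
          gcongr
          refine hx.trans ?_
          gcongr ?_ * ?_
          exact Real.rpow_le_rpow_of_nonpos (by positivity) h3
            (neg_nonpos.2 (by positivity))
      _ = ENNReal.ofReal B * ∫⁻ x in Sᶜ, ‖u x‖ₑ ^ r :=
          lintegral_const_mul' _ _ ENNReal.ofReal_ne_top
      _ ≤ ENNReal.ofReal B * ENNReal.ofReal (C₁ ^ r) := by
          gcongr
          exact (setLIntegral_le_lintegral _ _).trans hint
      _ ≤ _ := by
          rw [← ENNReal.ofReal_mul hB0]
          exact ENNReal.ofReal_le_ofReal hBle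
  rw [← lintegral_add_compl _ hSm]
  refine (add_le_add hin hout).trans ?_
  rw [← ENNReal.ofReal_add (by positivity) (by positivity)]
  apply ENNReal.ofReal_le_ofReal
  have hc : 0 < C₂ ^ q := by positivity
  have h6 : (N : ℝ) * M + 1 ≤ ((A + 1) * M + 1) * (1 + ℓ) := by
    have h7 : (N : ℝ) * M ≤ (A * ℓ + 1) * M := by gcongr
    have : 0 ≤ A * M + M * ℓ + ℓ := by positivity
    nlinarith
  have h8 := mul_le_mul_of_nonneg_left h6 hc.le
  nlinarith

/-- Proposition B.1: the real interpolation bound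
`‖u‖_q ≲ C₂ (1 + log₊(C₁/C₂))^{1/q}` for functions with `‖u‖_r ≤ C₁` and the
pointwise decay `|u(x)| ≤ C₂(1+|x|)^{-d/q}`. -/
theorem stmt13 (d : ℕ) (hd : 1 ≤ d) (r q : ℝ) (hr : 0 < r) (hrq : r < q) :
    ∃ K : ℝ, 0 < K ∧
      ∀ C₁ C₂ : ℝ, 0 < C₁ → 0 < C₂ →
        ∀ u : Rd d → ℂ, Measurable u →
          eLpNorm u (ENNReal.ofReal r) volume ≤ ENNReal.ofReal C₁ →
          (∀ᵐ x : Rd d, ‖u x‖ ≤ C₂ * (1 + ‖x‖) ^ (-((d : ℝ) / q))) →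
          eLpNorm u (ENNReal.ofReal q) volume
            ≤ ENNReal.ofReal (K * C₂ * (1 + max (Real.log (C₁ / C₂)) 0) ^ (1/q)) := by
  obtain ⟨K, hK, H⟩ := aux_main d hd r q hr hrq
  have hq : 0 < q := hr.trans hrq
  refine ⟨K ^ (1 / q), by positivity, ?_⟩
  intro C₁ C₂ h1 h2 u hu hn hdec
  have hr0 : ENNReal.ofReal r ≠ 0 := by simpa using hr
  have hq0 : ENNReal.ofReal q ≠ 0 := by simpa using hq
  rw [eLpNorm_eq_lintegral_rpow_enorm_toReal hr0 ENNReal.ofReal_ne_top,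
    ENNReal.toReal_ofReal hr.le] at hn
  have hint : ∫⁻ x, ‖u x‖ₑ ^ r ≤ ENNReal.ofReal (C₁ ^ r) := by
    have h := ENNReal.rpow_le_rpow hn hr.le
    rwa [← ENNReal.rpow_mul, one_div_mul_cancel hr.ne', ENNReal.rpow_one,
      ENNReal.ofReal_rpow_of_nonneg h1.le hr.le] at h
  have hfin := H C₁ C₂ h1 h2 u hu hint hdec
  rw [eLpNorm_eq_lintegral_rpow_enorm_toReal hq0 ENNReal.ofReal_ne_top,
    ENNReal.toReal_ofReal hq.le]
  have hL : 0 ≤ 1 + max (Real.log (C₁ / C₂)) 0 := by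
    have := le_max_right (Real.log (C₁ / C₂)) 0
    linarith
  refine (ENNReal.rpow_le_rpow hfin (by positivity : 0 ≤ 1 / q)).trans ?_
  rw [ENNReal.ofReal_rpow_of_nonneg (by positivity) (by positivity)]
  apply ENNReal.ofReal_le_ofReal
  rw [Real.mul_rpow (by positivity) hL, Real.mul_rpow hK.le (by positivity),
    ← Real.rpow_mul h2.le, mul_one_div_cancel hq.ne', Real.rpow_one]
end
end
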